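/- arXiv:1403.6399 — 4 statements merged into one kernel-verified Lean document; each statement's English description precedes it below -/
import Mathlib

section
/- Suppose that for each degree d ∈ ℕ, P_d is a d-feasible polynomial that minimizes the objective, i.e., ∫_B P_d dvol ≤ ∫_B Q dvol for every d-feasible polynomial Q. Let K_d = {x ∈ B : P_d(x) ≥ 1}. Then lim_{d→∞} vol(K_d \ K) = 0. -/
open MeasureTheory MvPolynomial Filter

/-- A real polynomial `P` in `n` variables is `d`-feasible (w.r.t. `B`, `K`) if its total
degree is at most `d`, `P ≥ 0` on `B` and `P ≥ 1` on `K`. -/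
def Feasible {n : ℕ} (B K : Set (Fin n → ℝ)) (d : ℕ) (P : MvPolynomial (Fin n) ℝ) : Prop :=
  P.totalDegree ≤ d ∧ (∀ x ∈ B, 0 ≤ eval x P) ∧ (∀ x ∈ K, 1 ≤ eval x P)

/-!
The integral over `B` of any feasible polynomial `P` is at least `vol {x ∈ B | 1 ≤ P x}` by Markov's
inequality, so it exceeds `vol K` by at least `vol ({x ∈ B | 1 ≤ P x} \ K)`. It therefore suffices
that the minimal integrals converge to `vol K`. To see this, approximate the indicator of `K` from
above by a continuous function with integral close to `vol K`, and that function from above on `B`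
by a polynomial (Stone–Weierstrass); the result is feasible in every large enough degree.
-/

section StoneWeierstrass

variable {σ R : Type*} [CommSemiring R] [TopologicalSpace R] [IsTopologicalSemiring R]

/-- Evaluation of multivariate polynomials, as an algebra homomorphism into the continuous functions
on `σ → R`; the multivariate analogue of `Polynomial.toContinuousMapAlgHom`. -/
noncomputable def mvPolynomialToContinuousMap : MvPolynomial σ R →ₐ[R] C(σ → R, R) where
  toFun P := ⟨fun x => eval x P, P.continuous_eval⟩
  map_one' := by ext; simp
  map_mul' _ _ := by ext; simp
  map_zero' := by ext; simp
  map_add' _ _ := by ext; simp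
  commutes' _ := by ext; simp [algebraMap_eq]

theorem separatesPoints_range_mvPolynomialToContinuousMap :
    (mvPolynomialToContinuousMap (σ := σ) (R := R)).range.SeparatesPoints := by
  intro x y hxy
  obtain ⟨i, hi⟩ := Function.ne_iff.mp hxy
  refine ⟨_, ⟨mvPolynomialToContinuousMap (X i), ⟨X i, rfl⟩, rfl⟩, ?_⟩
  simpa [mvPolynomialToContinuousMap] using hi

theorem exists_mvPolynomial_abs_sub_lt {B : Set (σ → ℝ)} (hB : IsCompact B) (f : C(σ → ℝ, ℝ))
    {ε : ℝ} (hε : 0 < ε) : ∃ Q : MvPolynomial σ ℝ, ∀ x ∈ B, |eval x Q - f x| < ε := by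
  obtain ⟨_, ⟨Q, rfl⟩, hQ⟩ :=
    ContinuousMap.exists_mem_subalgebra_near_continuous_of_isCompact_of_separatesPoints
      separatesPoints_range_mvPolynomialToContinuousMap f hB hε
  exact ⟨Q, hQ⟩

theorem exists_mvPolynomial_mem_Icc_add {B : Set (σ → ℝ)} (hB : IsCompact B) (f : C(σ → ℝ, ℝ))
    {ε : ℝ} (hε : 0 < ε) :
    ∃ Q : MvPolynomial σ ℝ, ∀ x ∈ B, eval x Q ∈ Set.Icc (f x) (f x + ε) := by
  obtain ⟨Q, hQ⟩ := exists_mvPolynomial_abs_sub_lt hB (f + .const _ (ε / 2)) (half_pos hε)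
  refine ⟨Q, fun x hx => ?_⟩
  have hx' := abs_lt.mp (hQ x hx)
  simp only [ContinuousMap.add_apply, ContinuousMap.const_apply] at hx'
  constructor <;> linarith

end StoneWeierstrass

theorem integrableOn_eval_mvPolynomial {σ : Type*} [Countable σ] {μ : Measure (σ → ℝ)}
    [IsFiniteMeasureOnCompacts μ] {B : Set (σ → ℝ)} (hB : IsCompact B) (P : MvPolynomial σ ℝ) :
    IntegrableOn (fun x => eval x P) B μ :=
  P.continuous_eval.continuousOn.integrableOn_compact hB

theorem exists_mvPolynomial_ge_setIntegral_lt_add {σ : Type*} [Countable σ] (μ : Measure (σ → ℝ))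
    [IsFiniteMeasureOnCompacts μ] {B : Set (σ → ℝ)} (hB : IsCompact B) (f : C(σ → ℝ, ℝ))
    {ε : ℝ} (hε : 0 < ε) :
    ∃ Q : MvPolynomial σ ℝ, (∀ x ∈ B, f x ≤ eval x Q) ∧
      ∫ x in B, eval x Q ∂μ < ∫ x in B, f x ∂μ + ε := by
  obtain ⟨δ, hδ, hδε⟩ := exists_pos_mul_lt hε (μ.real B)
  obtain ⟨Q, hQ⟩ := exists_mvPolynomial_mem_Icc_add hB f hδ
  refine ⟨Q, fun x hx => (hQ x hx).1, ?_⟩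
  have hf : IntegrableOn f B μ := f.continuous.continuousOn.integrableOn_compact hB
  have hδ_int : IntegrableOn (fun _ => δ) B μ := integrableOn_const hB.measure_ne_top
  calc ∫ x in B, eval x Q ∂μ
      ≤ ∫ x in B, (f x + δ) ∂μ :=
        setIntegral_mono_on (integrableOn_eval_mvPolynomial hB Q) (hf.add hδ_int)
          hB.measurableSet fun x hx => (hQ x hx).2
    _ = ∫ x in B, f x ∂μ + μ.real B * δ := by
        rw [integral_add hf hδ_int, setIntegral_const, smul_eq_mul]
    _ < ∫ x in B, f x ∂μ + ε := by gcongr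

theorem exists_continuous_integral_lt_measureReal_add {X : Type*} [TopologicalSpace X]
    [HasOuterApproxClosed X] [MeasurableSpace X] [OpensMeasurableSpace X] (μ : Measure X)
    [IsFiniteMeasure μ] {K : Set X} (hK : IsClosed K) {ε : ℝ} (hε : 0 < ε) :
    ∃ f : C(X, ℝ), (∀ x, 0 ≤ f x) ∧ (∀ x ∈ K, f x = 1) ∧ ∫ x, f x ∂μ < μ.real K + ε := by
  have hlim : Tendsto (fun m => ∫ x, (hK.apprSeq m x : ℝ) ∂μ) atTop (nhds (μ.real K)) := by
    simp_rw [← BoundedContinuousFunction.toReal_lintegral_coe_eq_integral]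
    exact (ENNReal.tendsto_toReal (measure_ne_top μ K)).comp
      (HasOuterApproxClosed.tendsto_lintegral_apprSeq hK μ)
  obtain ⟨m, hm⟩ := (hlim.eventually_lt_const (lt_add_of_pos_right _ hε)).exists
  refine ⟨⟨fun x => hK.apprSeq m x, by fun_prop⟩, fun x => NNReal.coe_nonneg _, fun x hx => ?_, hm⟩
  simp [HasOuterApproxClosed.apprSeq_apply_eq_one hK m hx]

theorem mul_measureReal_setOf_ge_le_setIntegral {X : Type*} [MeasurableSpace X] {μ : Measure X}
    {s : Set X} (hs : MeasurableSet s) {f : X → ℝ} (hf : IntegrableOn f s μ)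
    (hf_nonneg : ∀ x ∈ s, 0 ≤ f x) (ε : ℝ) :
    ε * μ.real {x ∈ s | ε ≤ f x} ≤ ∫ x in s, f x ∂μ := by
  have hset : {x ∈ s | ε ≤ f x} = {x | ε ≤ f x} ∩ s := Set.inter_comm _ _
  rw [hset, ← measureReal_restrict_apply' hs]
  exact mul_meas_ge_le_integral_of_nonneg (ae_restrict_of_forall_mem hs hf_nonneg) hf ε

section Feasible

variable {n d : ℕ} {B K : Set (Fin n → ℝ)} (μ : Measure (Fin n → ℝ)) [IsFiniteMeasureOnCompacts μ]

theorem Feasible.measureReal_sdiff_le {P : MvPolynomial (Fin n) ℝ} (hP : Feasible B K d P)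
    (hB : IsCompact B) (hK : MeasurableSet K) (hKB : K ⊆ B) :
    μ.real ({x ∈ B | 1 ≤ eval x P} \ K) ≤ ∫ x in B, eval x P ∂μ - μ.real K := by
  obtain ⟨-, hP_nonneg, hP_one⟩ := hP
  have hfinite : μ {x ∈ B | 1 ≤ eval x P} ≠ ⊤ :=
    measure_ne_top_of_subset (Set.sep_subset _ _) hB.measure_ne_top
  have hmarkov := mul_measureReal_setOf_ge_le_setIntegral hB.measurableSet
    (integrableOn_eval_mvPolynomial (μ := μ) hB P) hP_nonneg 1
  have hK_subset : K ⊆ {x ∈ B | 1 ≤ eval x P} := fun x hx => ⟨hKB hx, hP_one x hx⟩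
  rw [measureReal_sdiff hK_subset hK hfinite]
  linarith

theorem exists_feasible_setIntegral_lt_measureReal_add (hB : IsCompact B) (hK : IsClosed K)
    (hKB : K ⊆ B) {ε : ℝ} (hε : 0 < ε) :
    ∃ Q : MvPolynomial (Fin n) ℝ, Feasible B K Q.totalDegree Q ∧
      ∫ x in B, eval x Q ∂μ < μ.real K + ε := by
  have : IsFiniteMeasure (μ.restrict B) := isFiniteMeasure_restrict.mpr hB.measure_ne_top
  obtain ⟨f, hf_nonneg, hf_one, hf_int⟩ :=
    exists_continuous_integral_lt_measureReal_add (μ.restrict B) hK (half_pos hε)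
  obtain ⟨Q, hfQ, hQ_int⟩ := exists_mvPolynomial_ge_setIntegral_lt_add μ hB f (half_pos hε)
  rw [measureReal_restrict_apply' hB.measurableSet, Set.inter_eq_left.mpr hKB] at hf_int
  exact ⟨Q, ⟨le_rfl, fun x hx => (hf_nonneg x).trans (hfQ x hx),
    fun x hx => (hf_one x hx).ge.trans (hfQ x (hKB hx))⟩, by linarith⟩

theorem tendsto_setIntegral_eval_of_feasible_of_forall_le (hB : IsCompact B) (hK : IsClosed K)
    (hKB : K ⊆ B) {P : ℕ → MvPolynomial (Fin n) ℝ} (hfeas : ∀ d, Feasible B K d (P d))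
    (hmin : ∀ d, ∀ Q : MvPolynomial (Fin n) ℝ, Feasible B K d Q →
      ∫ x in B, eval x (P d) ∂μ ≤ ∫ x in B, eval x Q ∂μ) :
    Tendsto (fun d => ∫ x in B, eval x (P d) ∂μ) atTop (nhds (μ.real K)) := by
  refine tendsto_order.mpr ⟨fun a ha => .of_forall fun d => ?_, fun a ha => ?_⟩
  · have hsdiff := (hfeas d).measureReal_sdiff_le μ hB hK.measurableSet hKB
    exact ha.trans_le (sub_nonneg.mp (measureReal_nonneg.trans hsdiff))
  · obtain ⟨Q, ⟨-, hQ⟩, hQ_int⟩ :=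
      exists_feasible_setIntegral_lt_measureReal_add μ hB hK hKB (sub_pos.mpr ha)
    rw [add_sub_cancel] at hQ_int
    filter_upwards [eventually_ge_atTop Q.totalDegree] with d hd
    exact (hmin d Q ⟨hd, hQ⟩).trans_lt hQ_int

end Feasible

theorem stmt_0_general {n : ℕ} (μ : Measure (Fin n → ℝ)) [IsFiniteMeasureOnCompacts μ]
    (B K : Set (Fin n → ℝ)) (hB : IsCompact B) (hK : IsClosed K)
    (hKB : K ⊆ B) (P : ℕ → MvPolynomial (Fin n) ℝ)
    (hfeas : ∀ d, Feasible B K d (P d))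
    (hmin : ∀ d, ∀ Q : MvPolynomial (Fin n) ℝ, Feasible B K d Q →
      ∫ x in B, eval x (P d) ∂μ ≤ ∫ x in B, eval x Q ∂μ) :
    Tendsto (fun d => μ ({x ∈ B | 1 ≤ eval x (P d)} \ K)) atTop (nhds 0) := by
  have hfinite (d : ℕ) : μ ({x ∈ B | 1 ≤ eval x (P d)} \ K) ≠ ⊤ :=
    measure_ne_top_of_subset (Set.sdiff_subset.trans (Set.sep_subset _ _)) hB.measure_ne_top
  have hexcess : Tendsto (fun d => ∫ x in B, eval x (P d) ∂μ - μ.real K) atTop (nhds 0) :=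
    tendsto_sub_nhds_zero_iff.mpr
      (tendsto_setIntegral_eval_of_feasible_of_forall_le μ hB hK hKB hfeas hmin)
  exact (ENNReal.tendsto_toReal_zero_iff hfinite).mp <|
    squeeze_zero (fun _ => measureReal_nonneg)
      (fun d => (hfeas d).measureReal_sdiff_le μ hB hK.measurableSet hKB) hexcess

theorem stmt_0 {n : ℕ} (B K : Set (Fin n → ℝ)) (hB : IsCompact B) (hK : IsClosed K)
    (hKB : K ⊆ B) (P : ℕ → MvPolynomial (Fin n) ℝ)
    (hfeas : ∀ d, Feasible B K d (P d))
    (hmin : ∀ d, ∀ Q : MvPolynomial (Fin n) ℝ, Feasible B K d Q →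
      ∫ x in B, eval x (P d) ≤ ∫ x in B, eval x Q) :
    Tendsto (fun d => volume ({x ∈ B | 1 ≤ eval x (P d)} \ K)) atTop (nhds 0) :=
  stmt_0_general volume B K hB hK hKB P hfeas hmin
end

section
/- For every ε > 0 there exist a degree d ∈ ℕ and a d-feasible polynomial P such that ∫_B P dvol ≤ vol(K) + ε. -/
open MeasureTheory MvPolynomial

/-!
The indicator of the closed set `K` is a pointwise limit of uniformly bounded continuous functions
lying above it, so by dominated convergence some continuous `f ≥ 1_K` has integral at most
`vol (K ∩ B) + ε / 2` over `B`. By Stone–Weierstrass there is a polynomial between `f` and `f + δ`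
on the compact set `B`, and replacing `f` by it costs at most `δ vol B` in the integral.
-/

open scoped NNReal BoundedContinuousFunction

section StoneWeierstrass

variable {σ R : Type*} [CommSemiring R] [TopologicalSpace R] [IsTopologicalSemiring R]

variable (σ R) in
/-- The algebra homomorphism sending a polynomial to the continuous function it defines on `R^σ`;
the multivariate analogue of `Polynomial.toContinuousMapAlgHom`. Its range is the subalgebra to
which the Stone–Weierstrass theorem is applied. -/
noncomputable def mvPolynomialToContinuousMapAlgHom : MvPolynomial σ R →ₐ[R] C(σ → R, R) :=
  aeval fun i ↦ ⟨fun x ↦ x i, continuous_apply i⟩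

theorem mvPolynomialToContinuousMapAlgHom_apply (P : MvPolynomial σ R) (x : σ → R) :
    mvPolynomialToContinuousMapAlgHom σ R P x = eval x P := by
  induction P using MvPolynomial.induction_on with
  | C a => simp [mvPolynomialToContinuousMapAlgHom]
  | add P Q hP hQ => rw [map_add, ContinuousMap.add_apply, hP, hQ, map_add]
  | mul_X P i hP =>
    rw [map_mul, ContinuousMap.mul_apply, hP, map_mul]
    simp [mvPolynomialToContinuousMapAlgHom]

theorem separatesPoints_range_mvPolynomialToContinuousMapAlgHom :
    (mvPolynomialToContinuousMapAlgHom σ R).range.SeparatesPoints := by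
  intro x y hxy
  obtain ⟨i, hi⟩ := Function.ne_iff.mp hxy
  refine ⟨_, ⟨_, ⟨X i, rfl⟩, rfl⟩, ?_⟩
  simpa [mvPolynomialToContinuousMapAlgHom_apply] using hi

variable {B : Set (σ → ℝ)}

theorem exists_mvPolynomial_abs_sub_lt_of_isCompact (hB : IsCompact B) (f : C(σ → ℝ, ℝ))
    {δ : ℝ} (hδ : 0 < δ) : ∃ P : MvPolynomial σ ℝ, ∀ x ∈ B, |eval x P - f x| < δ := by
  obtain ⟨_, ⟨P, rfl⟩, hP⟩ :=
    ContinuousMap.exists_mem_subalgebra_near_continuous_of_isCompact_of_separatesPoints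
      separatesPoints_range_mvPolynomialToContinuousMapAlgHom f hB hδ
  exact ⟨P, fun x hx ↦ by simpa [mvPolynomialToContinuousMapAlgHom_apply] using hP x hx⟩

theorem exists_mvPolynomial_mem_Icc_of_isCompact (hB : IsCompact B) (f : C(σ → ℝ, ℝ))
    {δ : ℝ} (hδ : 0 < δ) : ∃ P : MvPolynomial σ ℝ, ∀ x ∈ B, eval x P ∈ Set.Icc (f x) (f x + δ) := by
  obtain ⟨Q, hQ⟩ := exists_mvPolynomial_abs_sub_lt_of_isCompact hB f (half_pos hδ)
  refine ⟨Q + C (δ / 2), fun x hx ↦ ?_⟩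
  obtain ⟨hlower, hupper⟩ := abs_lt.mp (hQ x hx)
  rw [map_add, eval_C]
  constructor <;> linarith

theorem exists_mvPolynomial_ge_setIntegral_le [Countable σ] {μ : Measure (σ → ℝ)}
    [IsFiniteMeasureOnCompacts μ] (hB : IsCompact B) (f : C(σ → ℝ, ℝ)) {ε : ℝ} (hε : 0 < ε) :
    ∃ P : MvPolynomial σ ℝ, (∀ x ∈ B, f x ≤ eval x P) ∧
      ∫ x in B, eval x P ∂μ ≤ ∫ x in B, f x ∂μ + ε := by
  obtain ⟨δ, hδ, hδε⟩ := exists_pos_mul_lt hε (μ.real B)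
  obtain ⟨P, hP⟩ := exists_mvPolynomial_mem_Icc_of_isCompact hB f hδ
  refine ⟨P, fun x hx ↦ (hP x hx).1, ?_⟩
  have hf_int : IntegrableOn f B μ := f.continuous.continuousOn.integrableOn_compact hB
  have hδ_int : IntegrableOn (fun _ ↦ δ) B μ := integrableOn_const hB.measure_lt_top.ne
  calc ∫ x in B, eval x P ∂μ
      ≤ ∫ x in B, (f x + δ) ∂μ :=
        setIntegral_mono_on ((continuous_eval P).continuousOn.integrableOn_compact hB)
          (hf_int.add hδ_int) hB.measurableSet fun x hx ↦ (hP x hx).2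
    _ = ∫ x in B, f x ∂μ + μ.real B * δ := by
        rw [integral_add hf_int hδ_int, setIntegral_const, smul_eq_mul]
    _ ≤ ∫ x in B, f x ∂μ + ε := by gcongr

end StoneWeierstrass

theorem exists_boundedContinuous_indicator_le_integral_lt {X : Type*} [TopologicalSpace X]
    [HasOuterApproxClosed X] [MeasurableSpace X] [OpensMeasurableSpace X] (μ : Measure X)
    [IsFiniteMeasure μ] {F : Set X} (hF : IsClosed F) {ε : ℝ} (hε : 0 < ε) :
    ∃ f : X →ᵇ ℝ≥0, F.indicator 1 ≤ ⇑f ∧ ∫ x, (f x : ℝ) ∂μ < μ.real F + ε := by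
  have htendsto : Filter.Tendsto (fun n ↦ ∫ x, (hF.apprSeq n x : ℝ) ∂μ) Filter.atTop
      (nhds (μ.real F)) := by
    simp_rw [← BoundedContinuousFunction.toReal_lintegral_coe_eq_integral]
    exact (ENNReal.tendsto_toReal (measure_ne_top μ F)).comp
      (HasOuterApproxClosed.tendsto_lintegral_apprSeq hF μ)
  obtain ⟨n, hn⟩ := (htendsto.eventually_lt_const (lt_add_of_pos_right _ hε)).exists
  exact ⟨hF.apprSeq n, HasOuterApproxClosed.indicator_le_apprSeq hF n, hn⟩

theorem stmt_2_general {σ : Type*} [Countable σ] (μ : Measure (σ → ℝ))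
    [IsFiniteMeasureOnCompacts μ] {B K : Set (σ → ℝ)} (hB : IsCompact B) (hK : IsClosed K)
    {ε : ℝ} (hε : 0 < ε) :
    ∃ P : MvPolynomial σ ℝ, (∀ x ∈ B, 0 ≤ eval x P) ∧ (∀ x ∈ K ∩ B, 1 ≤ eval x P) ∧
      ∫ x in B, eval x P ∂μ ≤ μ.real (K ∩ B) + ε := by
  have : IsFiniteMeasure (μ.restrict B) := isFiniteMeasure_restrict.mpr hB.measure_lt_top.ne
  obtain ⟨f, hKf, hf⟩ :=
    exists_boundedContinuous_indicator_le_integral_lt (μ.restrict B) hK (half_pos hε)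
  obtain ⟨P, hfP, hP⟩ := exists_mvPolynomial_ge_setIntegral_le (μ := μ) hB
    ⟨fun x ↦ (f x : ℝ), by fun_prop⟩ (half_pos hε)
  rw [measureReal_restrict_apply hK.measurableSet] at hf
  refine ⟨P, fun x hx ↦ (f x).coe_nonneg.trans (hfP x hx), fun x ⟨hxK, hxB⟩ ↦ ?_, ?_⟩
  · have hfx : 1 ≤ f x := by simpa [hxK] using hKf x
    exact (NNReal.one_le_coe.mpr hfx).trans (hfP x hxB)
  · simp only [ContinuousMap.coe_mk] at hP
    linarith

theorem stmt_2 {n : ℕ} (B K : Set (Fin n → ℝ)) (hB : IsCompact B) (hK : IsClosed K)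
    (hKB : K ⊆ B) :
    ∀ ε : ℝ, 0 < ε → ∃ d : ℕ, ∃ P : MvPolynomial (Fin n) ℝ, Feasible B K d P ∧
      ∫ x in B, eval x P ≤ (volume (K ∩ B)).toReal + ε := by
  intro ε hε
  obtain ⟨P, hPB, hPK, hP⟩ := stmt_2_general volume hB hK hε
  exact ⟨P.totalDegree, P, ⟨le_rfl, hPB, fun x hx ↦ hPK x ⟨hx, hKB hx⟩⟩, hP⟩
end

section
/- Suppose K with defining polynomials g₁,…,g_l satisfies Putinar's property. If f ∈ ℝ[x₁,…,xₙ] satisfies f(x) > 0 for all x ∈ K, then there exist SOS polynomials τ₀, τ₁, …, τ_l such that f = τ₀ + Σ_{j=1}^l τ_j g_j. -/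
open MvPolynomial

/-- `K = {x : gⱼ(x) ≥ 0, j = 1,…,l}`, with the defining polynomials `g`, satisfies
Putinar's property if there are SOS polynomials `σ₀, σ₁, …, σ_l` such that
`{x : σ₀(x) + Σⱼ σⱼ(x) gⱼ(x) ≥ 0}` is compact. -/
def PutinarProperty {n l : ℕ} (g : Fin l → MvPolynomial (Fin n) ℝ) : Prop :=
  ∃ σ₀ : MvPolynomial (Fin n) ℝ, ∃ σ : Fin l → MvPolynomial (Fin n) ℝ,
    IsSumSq σ₀ ∧ (∀ j, IsSumSq (σ j)) ∧
    IsCompact {x : Fin n → ℝ | 0 ≤ eval x (σ₀ + ∑ j, σ j * g j)}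

/-!
Let `M` be the quadratic module generated by `g`.

Let `h ∈ M` define a compact set. The polynomial `N - ∑ xᵢ²` is positive on `{h ≥ 0}` for large `N`,
so the Positivstellensatz gives `1 + t₁ = (N - ∑ xᵢ²) t₂` with `t₁`, `t₂` in the preordering
`T = Σ + hΣ`, where `Σ` is the set of sums of squares. Multiplication by `1 + t₁` maps
`T + (N - ∑ xᵢ²) T` into `T`, and Wörmann's computation turns this into `N' - ∑ xᵢ² ∈ T ⊆ M`.
Hence `M` is archimedean.

If `f ∉ M`, the module `M - fΣ` does not contain `-1` and extends to a maximal such quadratic module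
`Q`. As `Q` is archimedean, `A / (Q ∩ -Q)` is `ℝ`, so `Q` yields a point at which every `gⱼ` is
nonnegative and `f` is nonpositive.

The Positivstellensatz follows from a specialization theorem of Artin–Lang type. A preordering
extends to an ordering, hence to a homomorphism into an ordered field with the intermediate value
property for polynomials. Finitely many polynomials then take, at some real point, the signs of
their images: variables are eliminated one at a time, comparing the sign patterns along a line of a
family of polynomials closed under derivatives and pseudo-remainders (Cohen–Hörmander).
-/

open scoped Polynomial

namespace Putinar

/-! ### Polynomials over ordered fields with the intermediate value property -/

/-- An ordered field whose polynomials satisfy the intermediate value theorem. These are exactly the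
real closed fields, and the intermediate value property is the only characterisation used here. -/
class HasPolynomialIVT (L : Type*) [Field L] [LinearOrder L] : Prop where
  exists_eval_eq_zero : ∀ (f : L[X]) {a b : L}, a < b → f.eval a < 0 → 0 < f.eval b →
    ∃ c ∈ Set.Ioo a b, f.eval c = 0

instance : HasPolynomialIVT ℝ where
  exists_eval_eq_zero f _ _ hab ha hb :=
    intermediate_value_Ioo hab.le f.continuous.continuousOn ⟨ha, hb⟩

lemma exists_eq_X_sub_C_pow_succ_mul {K : Type*} [Field K] {p : K[X]} (hp : p ≠ 0) {a : K}
    (ha : p.eval a = 0) :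
    ∃ (m : ℕ) (q : K[X]), p = (Polynomial.X - Polynomial.C a) ^ (m + 1) * q ∧ q.eval a ≠ 0 := by
  obtain ⟨q, hpq, hq⟩ := Polynomial.exists_eq_pow_rootMultiplicity_mul_and_not_dvd p hp a
  obtain ⟨m, hm⟩ := Nat.exists_eq_succ_of_ne_zero ((Polynomial.rootMultiplicity_pos hp).2 ha).ne'
  rw [Polynomial.dvd_iff_isRoot] at hq
  exact ⟨m, q, by rwa [hm] at hpq, hq⟩

section OrderedField

variable {L : Type*} [Field L] [LinearOrder L] [IsStrictOrderedRing L]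

lemma exists_eventually_le_eval (f : L[X]) (hf : 0 < f.leadingCoeff) :
    ∃ ε > 0, ∀ᶠ x in Filter.atTop, ε ≤ f.eval x := by
  induction hd : f.natDegree generalizing f with
  | zero =>
    rw [Polynomial.eq_C_of_natDegree_eq_zero hd] at hf ⊢
    exact ⟨f.coeff 0, by simpa using hf, by simp⟩
  | succ d ih =>
    have hd' : f.divX.natDegree = d := by
      rw [Polynomial.natDegree_divX_eq_natDegree_tsub_one, hd, Nat.add_sub_cancel]
    have hlead : f.divX.leadingCoeff = f.leadingCoeff := by
      rw [Polynomial.leadingCoeff, hd', Polynomial.coeff_divX, Polynomial.leadingCoeff, hd]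
    obtain ⟨ε, hε, hlarge⟩ := ih f.divX (hlead ▸ hf) hd'
    refine ⟨1, one_pos, ?_⟩
    filter_upwards [hlarge, Filter.eventually_ge_atTop ((1 - f.coeff 0) / ε),
      Filter.eventually_ge_atTop 0] with x hx hx1 hx0
    have heval : f.eval x = f.divX.eval x * x + f.coeff 0 := by
      conv_lhs => rw [← Polynomial.divX_mul_X_add f]
      simp
    rw [div_le_iff₀ hε] at hx1
    linarith [mul_le_mul_of_nonneg_right hx hx0]

lemma exists_gt_eval_pos_of_derivative_pos {f : L[X]} {x : L}
    (hf : ∀ t, x < t → 0 < f.derivative.eval t) : ∃ t, x < t ∧ 0 < f.eval t := by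
  have hf' : 0 < f.derivative.leadingCoeff := by
    by_contra! hle
    have hne : f.derivative ≠ 0 := fun h0 => by simpa [h0] using hf (x + 1) (lt_add_one x)
    have hneg : 0 < (-f.derivative).leadingCoeff := by
      rw [Polynomial.leadingCoeff_neg]
      exact neg_pos.2 (hle.lt_of_ne (Polynomial.leadingCoeff_ne_zero.2 hne))
    obtain ⟨ε, hε, hlarge⟩ := exists_eventually_le_eval _ hneg
    obtain ⟨t, ht, hxt⟩ := (hlarge.and (Filter.eventually_gt_atTop x)).exists
    rw [Polynomial.eval_neg] at ht
    linarith [hf t hxt]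
  rw [Polynomial.leadingCoeff_derivative] at hf'
  obtain ⟨ε, hε, hlarge⟩ :=
    exists_eventually_le_eval f (pos_of_mul_pos_left hf' (Nat.cast_nonneg _))
  obtain ⟨t, ht, hxt⟩ := (hlarge.and (Filter.eventually_gt_atTop x)).exists
  exact ⟨t, hxt, hε.trans_le ht⟩

variable [HasPolynomialIVT L]

lemma exists_eval_eq_zero_of_mul_neg (f : L[X]) {a b : L} (hab : a < b)
    (hf : f.eval a * f.eval b < 0) : ∃ c ∈ Set.Ioo a b, f.eval c = 0 := by
  rcases mul_neg_iff.1 hf with ⟨ha, hb⟩ | ⟨ha, hb⟩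
  · simpa using
      HasPolynomialIVT.exists_eval_eq_zero (-f) hab (by simpa using ha) (by simpa using hb)
  · exact HasPolynomialIVT.exists_eval_eq_zero f hab ha hb

-- The derivative is `(X - a) ^ m * (X - b) ^ k * s` where `s` has opposite signs at `a` and `b`.
lemma exists_derivative_eval_eq_zero_of_mul_pos (r : L[X]) {a b : L} (hab : a < b) (m k : ℕ)
    (hr : 0 < r.eval a * r.eval b) :
    ∃ c ∈ Set.Ioo a b, ((Polynomial.X - Polynomial.C a) ^ (m + 1) *
      ((Polynomial.X - Polynomial.C b) ^ (k + 1) * r)).derivative.eval c = 0 := by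
  let s : L[X] := Polynomial.C (m + 1 : L) * (Polynomial.X - Polynomial.C b) * r +
    Polynomial.C (k + 1 : L) * (Polynomial.X - Polynomial.C a) * r +
    (Polynomial.X - Polynomial.C a) * (Polynomial.X - Polynomial.C b) * r.derivative
  have hderiv : ((Polynomial.X - Polynomial.C a) ^ (m + 1) *
      ((Polynomial.X - Polynomial.C b) ^ (k + 1) * r)).derivative =
      (Polynomial.X - Polynomial.C a) ^ m * (Polynomial.X - Polynomial.C b) ^ k * s := by
    simp only [s, Polynomial.derivative_mul, Polynomial.derivative_X_sub_C_pow, Nat.cast_add,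
      Nat.cast_one, Nat.add_sub_cancel, map_add, Polynomial.C_1, map_natCast]
    ring
  have hs : s.eval a * s.eval b =
      -((m + 1) * (k + 1) * (b - a) ^ 2 * (r.eval a * r.eval b)) := by
    simp [s]; ring
  obtain ⟨c, hc, hc0⟩ := exists_eval_eq_zero_of_mul_neg s hab <| by
    have := sub_pos.2 hab
    rw [hs]
    exact neg_neg_of_pos (by positivity)
  exact ⟨c, hc, by rw [hderiv, Polynomial.eval_mul, hc0, mul_zero]⟩

lemma exists_derivative_eval_eq_zero_of_no_root {p : L[X]} {a b : L} (hab : a < b)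
    (ha : p.eval a = 0) (hb : p.eval b = 0) (hp : ∀ x ∈ Set.Ioo a b, p.eval x ≠ 0) :
    ∃ c ∈ Set.Ioo a b, p.derivative.eval c = 0 := by
  have hp0 : p ≠ 0 := by
    rintro rfl
    obtain ⟨x, hx⟩ := exists_between hab
    exact hp x hx Polynomial.eval_zero
  obtain ⟨m, q, rfl, hqa⟩ := exists_eq_X_sub_C_pow_succ_mul hp0 ha
  have hqb : q.eval b = 0 := by simpa [sub_eq_zero, hab.ne'] using hb
  obtain ⟨k, r, rfl, hrb⟩ := exists_eq_X_sub_C_pow_succ_mul (right_ne_zero_of_mul hp0) hqb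
  have hra : r.eval a ≠ 0 := fun h0 => hqa (by simp [h0])
  refine exists_derivative_eval_eq_zero_of_mul_pos r hab m k ?_
  refine (mul_ne_zero hra hrb).lt_or_gt.resolve_left fun hneg => ?_
  obtain ⟨c, hc, hc0⟩ := exists_eval_eq_zero_of_mul_neg r hab hneg
  exact hp c hc (by simp [hc0])

lemma exists_derivative_eval_eq_zero (p : L[X]) {a b : L} (hab : a < b) (ha : p.eval a = 0)
    (hb : p.eval b = 0) : ∃ c ∈ Set.Ioo a b, p.derivative.eval c = 0 := by
  rcases eq_or_ne p 0 with rfl | hp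
  · simpa using exists_between hab
  have hfin : {x | p.eval x = 0 ∧ x ∈ Set.Ioc a b}.Finite :=
    (Polynomial.finite_setOfPred_isRoot hp).subset fun _ hx => hx.1
  obtain ⟨b', ⟨hb', hab'⟩, hmin⟩ := Set.exists_min_image _ id hfin ⟨b, hb, hab, le_rfl⟩
  obtain ⟨c, hc, hc0⟩ := exists_derivative_eval_eq_zero_of_no_root hab'.1 ha hb' fun x hx hx0 =>
    (hmin x ⟨hx0, hx.1, hx.2.le.trans hab'.2⟩).not_gt hx.2
  exact ⟨c, ⟨hc.1, hc.2.trans_le hab'.2⟩, hc0⟩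

lemma eval_lt_eval_of_derivative_pos (p : L[X]) {a b : L} (hab : a < b)
    (hp : ∀ x ∈ Set.Ioo a b, 0 < p.derivative.eval x) : p.eval a < p.eval b := by
  have hba : 0 < b - a := sub_pos.2 hab
  set slope := (p.eval b - p.eval a) / (b - a) with hslope
  obtain ⟨c, hc, hc0⟩ := exists_derivative_eval_eq_zero
    (p - Polynomial.C (p.eval a) - Polynomial.C slope * (Polynomial.X - Polynomial.C a)) hab
    (by simp) (by simp [hslope, hba.ne'])
  have hpos : 0 < slope := by
    have : p.derivative.eval c = slope := by simpa [sub_eq_zero] using hc0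
    exact this ▸ hp c hc
  rwa [hslope, div_pos_iff_of_pos_right hba, sub_pos] at hpos

lemma isSquare_of_nonneg {c : L} (hc : 0 ≤ c) : IsSquare c := by
  rcases hc.eq_or_lt with rfl | hc
  · exact IsSquare.zero
  obtain ⟨x, -, hx⟩ := HasPolynomialIVT.exists_eval_eq_zero (Polynomial.X ^ 2 - Polynomial.C c)
    (a := 0) (b := c + 1) (by positivity) (by simpa using hc) (by simp; nlinarith)
  exact ⟨x, by simpa [sub_eq_zero, sq, eq_comm] using hx⟩

lemma sign_map_of_hasPolynomialIVT {F : Type*} [Field F] [LinearOrder F] [IsStrictOrderedRing F]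
    (φ : L →+* F) (c : L) : SignType.sign (φ c) = SignType.sign c := by
  have hpos : ∀ c : L, 0 < c → 0 < φ c := fun c hc => by
    obtain ⟨d, rfl⟩ := isSquare_of_nonneg hc.le
    rw [map_mul]
    exact mul_self_pos.2 ((map_ne_zero φ).2 (left_ne_zero_of_mul hc.ne'))
  exact ((strictMono_iff_map_pos φ).2 hpos).sign_comp c

end OrderedField

/-! ### Sign patterns on the cells of a finite partition of the line -/

/-- The cell of `x` in the partition of the line into the marked points `a i` and the open intervals
between them. -/
def cell {ι L : Type*} [LinearOrder L] (a : ι → L) (x : L) : Set L :=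
  {t | ∀ i, cmp (a i) t = cmp (a i) x}

section Cell

variable {ι L : Type*} [LinearOrder L] {a : ι → L} {x : L}

lemma self_mem_cell (a : ι → L) (x : L) : x ∈ cell a x := fun _ => rfl

lemma mem_cell_iff (hx : ∀ i, a i ≠ x) {t : L} :
    t ∈ cell a x ↔ ∀ i, (a i < x → a i < t) ∧ (x < a i → t < a i) := by
  refine forall_congr' fun i => ?_
  rcases (hx i).lt_or_gt with hlt | hgt
  · simp [cmp_eq_lt_iff, (cmp_eq_lt_iff _ _).2 hlt, hlt, hlt.not_gt]
  · simp [cmp_eq_gt_iff, (cmp_eq_gt_iff _ _).2 hgt, hgt, hgt.not_gt]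

lemma ordConnected_cell (a : ι → L) (x : L) : (cell a x).OrdConnected := by
  refine ⟨fun u hu v hv t ht i => ?_⟩
  rw [← hu i]
  rcases lt_trichotomy (a i) u with h | h | h
  · rw [(cmp_eq_lt_iff _ _).2 h, (cmp_eq_lt_iff _ _).2 (h.trans_le ht.1)]
  · have hv' : v = a i := ((eq_iff_eq_of_cmp_eq_cmp ((hu i).trans (hv i).symm)).1 h).symm
    rw [le_antisymm (ht.2.trans hv'.le) (h.le.trans ht.1), h]
  · have hv' : v < a i := (cmp_eq_gt_iff _ _).1
      ((hv i).trans ((hu i).symm.trans ((cmp_eq_gt_iff _ _).2 h)))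
    rw [(cmp_eq_gt_iff _ _).2 h, (cmp_eq_gt_iff _ _).2 (ht.2.trans_lt hv')]

variable [Finite ι] [DenselyOrdered L] [NoMinOrder L] [NoMaxOrder L]

lemma exists_lt_mem_cell (hx : ∀ i, a i ≠ x) : ∃ t ∈ cell a x, t < x := by
  have : Fintype ι := Fintype.ofFinite ι
  have : Nonempty L := ⟨x⟩
  obtain ⟨t, hlo, hhi⟩ := Order.exists_between_finsets (Finset.univ.image a |>.filter (· < x)) {x}
    fun u hu v hv => Finset.mem_singleton.1 hv ▸ (Finset.mem_filter.1 hu).2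
  have htx : t < x := hhi x (Finset.mem_singleton_self x)
  exact ⟨t, (mem_cell_iff hx).2 fun i => ⟨fun hi => hlo _ (by simp [hi]), htx.trans⟩, htx⟩

end Cell

section CellField

variable {ι L : Type*} [Field L] [LinearOrder L] [IsStrictOrderedRing L] {a : ι → L} {x : L}

lemma neg_mem_cell_neg_iff {t : L} :
    -t ∈ cell (fun i => -a i) (-x) ↔ t ∈ cell a x := by
  have hcmp : ∀ u v : L, cmp (-u) (-v) = cmp v u := fun u v => by
    simp [cmp, cmpUsing]
  refine forall_congr' fun i => ?_
  rw [hcmp, hcmp, cmp_eq_cmp_symm]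

lemma exists_gt_mem_cell [Finite ι] (hx : ∀ i, a i ≠ x) : ∃ t ∈ cell a x, x < t := by
  obtain ⟨t, ht, htx⟩ := exists_lt_mem_cell (a := fun i => -a i) (x := -x) (by simpa using hx)
  rw [← neg_neg t, neg_mem_cell_neg_iff] at ht
  exact ⟨-t, ht, lt_neg_of_lt_neg htx⟩

variable [HasPolynomialIVT L] {f : L[X]}

lemma strictMonoOn_eval_cell (hf : ∀ t ∈ cell a x, 0 < f.derivative.eval t) :
    StrictMonoOn (fun t => f.eval t) (cell a x) := fun _ hu _ hv huv =>
  eval_lt_eval_of_derivative_pos f huv fun t ht =>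
    hf t ((ordConnected_cell a x).out hu hv ⟨ht.1.le, ht.2.le⟩)

lemma exists_eval_pos_of_eval_pos_right {u v : L} (huv : u < v)
    (hf : ∀ t ∈ Set.Ioo u v, 0 < f.derivative.eval t) (hv : 0 < f.eval v) :
    ∃ t ∈ Set.Ico u v, 0 < f.eval t := by
  rcases lt_or_ge 0 (f.eval u) with hu | hu
  · exact ⟨u, ⟨le_rfl, huv⟩, hu⟩
  obtain ⟨c, hc, hc0⟩ : ∃ c ∈ Set.Ico u v, f.eval c = 0 := by
    rcases hu.lt_or_eq with hu | hu
    · obtain ⟨c, hc, hc0⟩ := HasPolynomialIVT.exists_eval_eq_zero f huv hu hv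
      exact ⟨c, ⟨hc.1.le, hc.2⟩, hc0⟩
    · exact ⟨u, ⟨le_rfl, huv⟩, hu⟩
  obtain ⟨t, hct, htv⟩ := exists_between hc.2
  refine ⟨t, ⟨hc.1.trans hct.le, htv⟩, hc0 ▸ eval_lt_eval_of_derivative_pos f hct fun s hs => ?_⟩
  exact hf s ⟨hc.1.trans_lt hs.1, hs.2.trans htv⟩

lemma exists_eval_pos_mem_cell_iff [Finite ι] (hx : ∀ i, a i ≠ x)
    (hf : ∀ t ∈ cell a x, 0 < f.derivative.eval t) :
    (∃ t ∈ cell a x, 0 < f.eval t) ↔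
      ∀ i, x < a i → (∀ j, x < a j → a i ≤ a j) → 0 < f.eval (a i) := by
  have hIoo : ∀ {i}, (∀ j, x < a j → a i ≤ a j) → ∀ {t}, t ∈ cell a x →
      ∀ s, t ≤ s → s < a i → s ∈ cell a x := fun hi t ht s hts hs =>
    (mem_cell_iff hx).2 fun j =>
      ⟨fun hj => (((mem_cell_iff hx).1 ht j).1 hj).trans_le hts, fun hj => hs.trans_le (hi j hj)⟩
  constructor
  · rintro ⟨t, ht, ht0⟩ i hxi hi
    exact ht0.trans <| eval_lt_eval_of_derivative_pos f (((mem_cell_iff hx).1 ht i).2 hxi)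
      fun s hs => hf s (hIoo hi ht s hs.1.le hs.2)
  · intro h
    rcases {i | x < a i}.eq_empty_or_nonempty with hempty | hne
    · have hcell : ∀ t, x ≤ t → t ∈ cell a x := fun t ht => (mem_cell_iff hx).2 fun i =>
        ⟨fun hi => hi.trans_le ht, fun hi => absurd hi (Set.eq_empty_iff_forall_notMem.1 hempty i)⟩
      obtain ⟨t, hxt, ht⟩ :=
        exists_gt_eval_pos_of_derivative_pos fun t ht => hf t (hcell t (le_of_lt ht))
      exact ⟨t, hcell t hxt.le, ht⟩
    · obtain ⟨i, hxi, hi⟩ := Set.exists_min_image _ a (Set.toFinite _) hne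
      obtain ⟨t, ht, ht0⟩ := exists_eval_pos_of_eval_pos_right hxi
        (fun s hs => hf s (hIoo hi (self_mem_cell a x) s hs.1.le hs.2)) (h i hxi hi)
      exact ⟨t, hIoo hi (self_mem_cell a x) t ht.1 ht.2, ht0⟩

lemma exists_eval_neg_mem_cell_iff [Finite ι] (hx : ∀ i, a i ≠ x)
    (hf : ∀ t ∈ cell a x, 0 < f.derivative.eval t) :
    (∃ t ∈ cell a x, f.eval t < 0) ↔
      ∀ i, a i < x → (∀ j, a j < x → a j ≤ a i) → f.eval (a i) < 0 := by
  have h := exists_eval_pos_mem_cell_iff (a := fun i => -a i) (x := -x)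
    (f := -(f.comp (-Polynomial.X))) (by simpa using hx) fun t ht => by
      rw [← neg_neg t, neg_mem_cell_neg_iff] at ht
      simpa [Polynomial.derivative_comp] using hf _ ht
  rw [(Equiv.neg L).exists_congr_left] at h
  simpa [neg_mem_cell_neg_iff] using h

lemma exists_eval_eq_zero_mem_cell (hf : ∀ t ∈ cell a x, 0 < f.derivative.eval t)
    (hneg : ∃ t ∈ cell a x, f.eval t < 0) (hpos : ∃ t ∈ cell a x, 0 < f.eval t) :
    ∃ t ∈ cell a x, f.eval t = 0 := by
  obtain ⟨u, hu, hu0⟩ := hneg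
  obtain ⟨v, hv, hv0⟩ := hpos
  have huv : u < v := ((strictMonoOn_eval_cell hf).lt_iff_lt hu hv).1 (hu0.trans hv0)
  obtain ⟨c, hc, hc0⟩ := HasPolynomialIVT.exists_eval_eq_zero f huv hu0 hv0
  exact ⟨c, (ordConnected_cell a x).out hu hv ⟨hc.1.le, hc.2.le⟩, hc0⟩

lemma eval_pos_of_not_exists_neg [Finite ι] (hx : ∀ i, a i ≠ x)
    (hf : ∀ t ∈ cell a x, 0 < f.derivative.eval t) (hneg : ¬∃ t ∈ cell a x, f.eval t < 0) :
    0 < f.eval x := by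
  obtain ⟨t, ht, htx⟩ := exists_lt_mem_cell hx
  push Not at hneg
  exact (hneg t ht).trans_lt (strictMonoOn_eval_cell hf ht (self_mem_cell a x) htx)

lemma eval_neg_of_not_exists_pos [Finite ι] (hx : ∀ i, a i ≠ x)
    (hf : ∀ t ∈ cell a x, 0 < f.derivative.eval t) (hpos : ¬∃ t ∈ cell a x, 0 < f.eval t) :
    f.eval x < 0 := by
  obtain ⟨t, ht, hxt⟩ := exists_gt_mem_cell hx
  push Not at hpos
  exact (strictMonoOn_eval_cell hf (self_mem_cell a x) ht hxt).trans_le (hpos t ht)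

end CellField

section TwoFields

lemma cmp_eq_cmp_of_lt_iff_lt {α β : Type*} [LinearOrder α] [LinearOrder β] {a b : α} {c d : β}
    (hlt : a < b ↔ c < d) (hgt : b < a ↔ d < c) : cmp a b = cmp c d := by
  simp only [cmp, cmpUsing, hlt, hgt]

lemma sign_eq_sign_of_cmp_eq_cmp {α β : Type*} [Zero α] [LinearOrder α] [Zero β] [LinearOrder β]
    {a : α} {b : β} (h : cmp 0 a = cmp 0 b) : SignType.sign a = SignType.sign b := by
  simp only [sign_apply, lt_iff_lt_of_cmp_eq_cmp h, lt_iff_lt_of_cmp_eq_cmp (cmp_eq_cmp_symm.1 h)]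

variable {ι L₁ L₂ : Type*} [Finite ι]
  [Field L₁] [LinearOrder L₁] [IsStrictOrderedRing L₁] [HasPolynomialIVT L₁]
  [Field L₂] [LinearOrder L₂] [IsStrictOrderedRing L₂] [HasPolynomialIVT L₂]
  {a : ι → L₁} {b : ι → L₂} {x : L₁} {y : L₂} {f₁ : L₁[X]} {f₂ : L₂[X]}

lemma sign_eval_eq_of_derivative_pos (hab : ∀ i j, cmp (a i) (a j) = cmp (b i) (b j))
    (hxy : ∀ i, cmp (a i) x = cmp (b i) y) (hx : ∀ i, a i ≠ x)
    (hsign : ∀ i, SignType.sign (f₁.eval (a i)) = SignType.sign (f₂.eval (b i)))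
    (hf₁ : ∀ t ∈ cell a x, 0 < f₁.derivative.eval t)
    (hf₂ : ∀ t ∈ cell b y, 0 < f₂.derivative.eval t)
    (hroot : ∀ x₀ ∈ cell a x, ∀ y₀ ∈ cell b y, f₁.eval x₀ = 0 → f₂.eval y₀ = 0 →
      cmp x₀ x = cmp y₀ y) :
    SignType.sign (f₁.eval x) = SignType.sign (f₂.eval y) := by
  have hy : ∀ i, b i ≠ y := fun i => (eq_iff_eq_of_cmp_eq_cmp (hxy i)).not.1 (hx i)
  have hlt : ∀ i, a i < x ↔ b i < y := fun i => lt_iff_lt_of_cmp_eq_cmp (hxy i)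
  have hgt : ∀ i, x < a i ↔ y < b i := fun i => lt_iff_lt_of_cmp_eq_cmp (cmp_eq_cmp_symm.1 (hxy i))
  have hle : ∀ i j, a i ≤ a j ↔ b i ≤ b j := fun i j => le_iff_le_of_cmp_eq_cmp (hab i j)
  have hpos : (∃ t ∈ cell a x, 0 < f₁.eval t) ↔ ∃ t ∈ cell b y, 0 < f₂.eval t := by
    rw [exists_eval_pos_mem_cell_iff hx hf₁, exists_eval_pos_mem_cell_iff hy hf₂]
    simp only [hgt, hle, ← sign_eq_one_iff, hsign]
  have hneg : (∃ t ∈ cell a x, f₁.eval t < 0) ↔ ∃ t ∈ cell b y, f₂.eval t < 0 := by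
    rw [exists_eval_neg_mem_cell_iff hx hf₁, exists_eval_neg_mem_cell_iff hy hf₂]
    simp only [hlt, hle, ← sign_eq_neg_one_iff, hsign]
  by_cases hpos₁ : ∃ t ∈ cell a x, 0 < f₁.eval t
  · by_cases hneg₁ : ∃ t ∈ cell a x, f₁.eval t < 0
    · obtain ⟨x₀, hx₀, h₁⟩ := exists_eval_eq_zero_mem_cell hf₁ hneg₁ hpos₁
      obtain ⟨y₀, hy₀, h₂⟩ := exists_eval_eq_zero_mem_cell hf₂ (hneg.1 hneg₁) (hpos.1 hpos₁)
      have h := hroot x₀ hx₀ y₀ hy₀ h₁ h₂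
      rw [← (strictMonoOn_eval_cell hf₁).cmp_map_eq hx₀ (self_mem_cell a x),
        ← (strictMonoOn_eval_cell hf₂).cmp_map_eq hy₀ (self_mem_cell b y), h₁, h₂] at h
      exact sign_eq_sign_of_cmp_eq_cmp h
    · rw [sign_pos (eval_pos_of_not_exists_neg hx hf₁ hneg₁),
        sign_pos (eval_pos_of_not_exists_neg hy hf₂ (hneg.not.1 hneg₁))]
  · rw [sign_neg (eval_neg_of_not_exists_pos hx hf₁ hpos₁),
        sign_neg (eval_neg_of_not_exists_pos hy hf₂ (hpos.not.1 hpos₁))]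

end TwoFields

/-! ### Matching the cells of two fields -/

section SameCell

variable {α β : Type*} [LinearOrder α] [LinearOrder β]

/-- The points `x` and `y` lie in corresponding cells of the partitions of the two lines whose
marked points are matched by `Z`. -/
def SameCell (Z : Order.PartialIso α β) (x : α) (y : β) : Prop :=
  ∀ p ∈ Z.val, cmp p.1 x = cmp p.2 y

variable {Z Z' : Order.PartialIso α β} {x : α} {y : β}

lemma sameCell_of_mem {p : α × β} (hp : p ∈ Z.val) : SameCell Z p.1 p.2 :=
  fun q hq => Z.prop q hq p hp

lemma SameCell.mono (hZ : Z.val ⊆ Z'.val) (h : SameCell Z' x y) : SameCell Z x y :=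
  fun p hp => h p (hZ hp)

lemma sameCell_comm : SameCell Z.comm y x ↔ SameCell Z x y :=
  Finset.forall_mem_image.trans (forall₂_congr fun _ _ => eq_comm)

lemma SameCell.mem_cell_fst_iff (h : SameCell Z x y) {t : α} :
    t ∈ cell (fun p : Z.val => p.1.1) x ↔ SameCell Z t y :=
  Subtype.forall.trans (forall₂_congr fun p hp => by rw [h p hp])

lemma SameCell.mem_cell_snd_iff (h : SameCell Z x y) {t : β} :
    t ∈ cell (fun p : Z.val => p.1.2) y ↔ SameCell Z x t :=
  Subtype.forall.trans (forall₂_congr fun p hp => by rw [h p hp, eq_comm])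

lemma SameCell.of_fst_lt_of_snd_le {p q : α × β} (hp : SameCell Z p.1 p.2)
    (hq : SameCell Z q.1 q.2) (hlt : p.1 < q.1) (hle : q.2 ≤ p.2) : SameCell Z p.1 q.2 :=
  fun z hz => cmp_eq_cmp_of_lt_iff_lt
    ⟨fun h => (lt_iff_lt_of_cmp_eq_cmp (hq z hz)).1 (h.trans hlt),
      fun h => (lt_iff_lt_of_cmp_eq_cmp (hp z hz)).2 (h.trans_le hle)⟩
    ⟨fun h => hle.trans_lt ((lt_iff_lt_of_cmp_eq_cmp (cmp_eq_cmp_symm.1 (hp z hz))).1 h),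
      fun h => hlt.trans ((lt_iff_lt_of_cmp_eq_cmp (cmp_eq_cmp_symm.1 (hq z hz))).2 h)⟩

end SameCell

section SameSigns

variable {L₁ L₂ : Type*} [Field L₁] [LinearOrder L₁] [Field L₂] [LinearOrder L₂]

/-- The polynomials `f₁` and `f₂` have the same sign at any two points of corresponding cells. -/
def SameSigns (Z : Order.PartialIso L₁ L₂) (f₁ : L₁[X]) (f₂ : L₂[X]) : Prop :=
  ∀ x y, SameCell Z x y → SignType.sign (f₁.eval x) = SignType.sign (f₂.eval y)

variable {Z Z' : Order.PartialIso L₁ L₂} {x : L₁} {y : L₂} {f₁ : L₁[X]} {f₂ : L₂[X]}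

lemma SameSigns.mono (hZ : Z.val ⊆ Z'.val) (h : SameSigns Z f₁ f₂) : SameSigns Z' f₁ f₂ :=
  fun x y hxy => h x y (hxy.mono hZ)

lemma SameSigns.comm (h : SameSigns Z f₁ f₂) : SameSigns Z.comm f₂ f₁ :=
  fun x y hxy => (h y x (sameCell_comm.1 hxy)).symm

lemma SameSigns.neg [IsStrictOrderedRing L₁] [IsStrictOrderedRing L₂] (h : SameSigns Z f₁ f₂) :
    SameSigns Z (-f₁) (-f₂) := fun x y hxy => by
  simp only [Polynomial.eval_neg, Left.sign_neg, h x y hxy]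

lemma SameSigns.eval_pos_of_mem_cell (h : SameSigns Z f₁ f₂) (hxy : SameCell Z x y)
    (hx : 0 < f₁.eval x) :
    (∀ t ∈ cell (fun p : Z.val => p.1.1) x, 0 < f₁.eval t) ∧
      ∀ t ∈ cell (fun p : Z.val => p.1.2) y, 0 < f₂.eval t := by
  simp only [← sign_eq_one_iff] at hx ⊢
  exact ⟨fun t ht => by rw [h t y (hxy.mem_cell_fst_iff.1 ht), ← h x y hxy, hx],
    fun t ht => by rw [← h x t (hxy.mem_cell_snd_iff.1 ht), hx]⟩

variable [IsStrictOrderedRing L₁]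

lemma SameSigns.eval_ne_zero (h : SameSigns Z f₁ f₂) (hf₁ : f₁ ≠ 0) (hxy : SameCell Z x y)
    (hx : ∀ p ∈ Z.val, p.1 ≠ x) : f₁.eval x ≠ 0 := fun hx0 => by
  obtain ⟨t, ht, htx⟩ :=
    exists_lt_mem_cell (a := fun p : Z.val => p.1.1) (x := x) (by simpa using hx)
  refine hf₁ (Polynomial.eq_zero_of_infinite_isRoot _ <| (Set.Icc_infinite htx).mono fun s hs => ?_)
  have hsy := hxy.mem_cell_fst_iff.1
    ((ordConnected_cell (fun p : Z.val => p.1.1) x).out ht (self_mem_cell _ _) hs)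
  rw [Set.mem_ofPred_eq, Polynomial.IsRoot, ← sign_eq_zero_iff, h s y hsy, ← h x y hxy, hx0,
    sign_zero]

variable [HasPolynomialIVT L₁]

-- Otherwise both roots would lie in one cell, on which the derivative does not vanish.
lemma SameSigns.snd_lt_snd_of_fst_lt_fst {d₂ : L₂[X]} (h : SameSigns Z f₁.derivative d₂)
    (hd : f₁.derivative ≠ 0) {p q : L₁ × L₂} (hp : SameCell Z p.1 p.2) (hq : SameCell Z q.1 q.2)
    (hp0 : f₁.eval p.1 = 0) (hq0 : f₁.eval q.1 = 0) (hlt : p.1 < q.1) : p.2 < q.2 := by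
  by_contra! hle
  have hpq : SameCell Z p.1 q.2 := hp.of_fst_lt_of_snd_le hq hlt hle
  obtain ⟨c, hc, hc0⟩ := exists_derivative_eval_eq_zero f₁ hlt hp0 hq0
  have hcq : SameCell Z c q.2 := hpq.mem_cell_fst_iff.1 <| (ordConnected_cell _ _).out
    (self_mem_cell _ _) (hpq.mem_cell_fst_iff.2 hq) ⟨hc.1.le, hc.2.le⟩
  refine h.eval_ne_zero hd hcq (fun z hz hzc => ?_) hc0
  subst hzc
  exact ((lt_iff_lt_of_cmp_eq_cmp (hq z hz)).1 hc.2).not_gt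
    ((lt_iff_lt_of_cmp_eq_cmp (cmp_eq_cmp_symm.1 (hpq z hz))).1 hc.1)

variable [IsStrictOrderedRing L₂] [HasPolynomialIVT L₂]

lemma SameSigns.exists_partialIso_common_roots (h : SameSigns Z f₁.derivative f₂.derivative)
    (hd₁ : f₁.derivative ≠ 0) (hd₂ : f₂.derivative ≠ 0) :
    ∃ Z' : Order.PartialIso L₁ L₂, Z.val ⊆ Z'.val ∧
      (∀ x y, f₁.eval x = 0 → f₂.eval y = 0 → SameCell Z x y → (x, y) ∈ Z'.val) ∧
      ∀ p ∈ Z'.val, p ∈ Z.val ∨ f₁.eval p.1 = 0 := by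
  classical
  have hf₁ : f₁ ≠ 0 := by rintro rfl; simp at hd₁
  have hf₂ : f₂ ≠ 0 := by rintro rfl; simp at hd₂
  let N := {p ∈ f₁.roots.toFinset ×ˢ f₂.roots.toFinset | SameCell Z p.1 p.2}
  have hN : ∀ p, p ∈ N ↔ (f₁.eval p.1 = 0 ∧ f₂.eval p.2 = 0) ∧ SameCell Z p.1 p.2 := fun p => by
    simp [N, hf₁, hf₂]
  have hcmp : ∀ p ∈ Z.val ∪ N, ∀ q ∈ Z.val ∪ N, cmp p.1 q.1 = cmp p.2 q.2 := by
    have hlt : ∀ p ∈ N, ∀ q ∈ N, p.1 < q.1 ↔ p.2 < q.2 := fun p hp q hq => by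
      rw [hN] at hp hq
      exact ⟨h.snd_lt_snd_of_fst_lt_fst hd₁ hp.2 hq.2 hp.1.1 hq.1.1,
        h.comm.snd_lt_snd_of_fst_lt_fst (p := p.swap) (q := q.swap) hd₂ (sameCell_comm.2 hp.2)
          (sameCell_comm.2 hq.2) hp.1.2 hq.1.2⟩
    intro p hp q hq
    rcases Finset.mem_union.1 hp with hp | hp <;> rcases Finset.mem_union.1 hq with hq | hq
    · exact Z.prop p hp q hq
    · exact ((hN q).1 hq).2 p hp
    · exact cmp_eq_cmp_symm.1 (((hN p).1 hp).2 q hq)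
    · exact cmp_eq_cmp_of_lt_iff_lt (hlt p hp q hq) (hlt q hq p hp)
  refine ⟨⟨Z.val ∪ N, hcmp⟩, Finset.subset_union_left, fun x y hx hy hxy => ?_, fun p hp => ?_⟩
  · exact Finset.mem_union_right _ ((hN (x, y)).2 ⟨⟨hx, hy⟩, hxy⟩)
  · exact (Finset.mem_union.1 hp).imp_right fun hp => ((hN p).1 hp).1.1

lemma SameSigns.sign_eval_eq_of_root_cmp (h : SameSigns Z f₁.derivative f₂.derivative)
    (hd₁ : f₁.derivative ≠ 0)
    (hZ : ∀ p ∈ Z.val, SignType.sign (f₁.eval p.1) = SignType.sign (f₂.eval p.2))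
    (hxy : SameCell Z x y)
    (hroot : ∀ x₀ y₀, SameCell Z x₀ y₀ → f₁.eval x₀ = 0 → f₂.eval y₀ = 0 → cmp x₀ x = cmp y₀ y) :
    SignType.sign (f₁.eval x) = SignType.sign (f₂.eval y) := by
  by_cases hx : ∀ p ∈ Z.val, p.1 ≠ x
  · wlog hpos : 0 < f₁.derivative.eval x generalizing f₁ f₂
    · have hne := h.eval_ne_zero hd₁ hxy hx
      have hneg := this (f₁ := -f₁) (f₂ := -f₂) (by simpa using h.neg) (by simpa using hd₁)
        (by simpa [Left.sign_neg] using hZ) (by simpa using hroot)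
        (by simpa using hne.lt_of_le (not_lt.1 hpos))
      simpa [Left.sign_neg] using hneg
    · obtain ⟨hpos₁, hpos₂⟩ := h.eval_pos_of_mem_cell hxy hpos
      refine sign_eval_eq_of_derivative_pos (a := fun p : Z.val => p.1.1)
        (b := fun p : Z.val => p.1.2) (fun p q => Z.prop _ p.2 _ q.2) (fun p => hxy _ p.2)
        (fun p => hx _ p.2) (fun p => hZ _ p.2) hpos₁ hpos₂ fun x₀ hx₀ y₀ hy₀ => hroot x₀ y₀ ?_
      have hx₀y := hxy.mem_cell_fst_iff.1 hx₀
      rw [← hx₀y.mem_cell_snd_iff]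
      exact hy₀
  · push Not at hx
    obtain ⟨p, hp, rfl⟩ := hx
    rw [← (eq_iff_eq_of_cmp_eq_cmp (hxy p hp)).1 rfl]
    exact hZ p hp

lemma SameSigns.exists_sameSigns_of_derivative (h : SameSigns Z f₁.derivative f₂.derivative)
    (hd₁ : f₁.derivative ≠ 0) (hd₂ : f₂.derivative ≠ 0)
    (hZ : ∀ p ∈ Z.val, SignType.sign (f₁.eval p.1) = SignType.sign (f₂.eval p.2)) :
    ∃ Z' : Order.PartialIso L₁ L₂, Z.val ⊆ Z'.val ∧ SameSigns Z' f₁ f₂ ∧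
      ∀ p ∈ Z'.val, p ∈ Z.val ∨ f₁.eval p.1 = 0 := by
  obtain ⟨Z', hsub, hroots, hnew⟩ := h.exists_partialIso_common_roots hd₁ hd₂
  refine ⟨Z', hsub, fun x y hxy => ?_, hnew⟩
  exact h.sign_eval_eq_of_root_cmp hd₁ hZ (hxy.mono hsub) fun x₀ y₀ h₀ hx₀ hy₀ =>
    hxy _ (hroots x₀ y₀ hx₀ hy₀ h₀)

end SameSigns

/-! ### Sign-preserving specialization of polynomials -/

lemma exists_finset_closed {α : Type*} (N : α → α → Finset α) (deg : α → ℕ)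
    (hN : ∀ f g, ∀ r ∈ N f g, deg r < deg f ∧ deg r < deg g) (F : Finset α) :
    ∃ C, F ⊆ C ∧ ∀ f ∈ C, ∀ g ∈ C, N f g ⊆ C := by
  classical
  suffices key : ∀ d (C : Finset α), (∀ f ∈ C, ∀ g ∈ C, ∀ r ∈ N f g, r ∈ C ∨ deg r < d) →
      ∃ C', C ⊆ C' ∧ ∀ f ∈ C', ∀ g ∈ C', N f g ⊆ C' from
    key (F.sup deg) F fun f hf g _ r hr => .inr ((hN f g r hr).1.trans_le (Finset.le_sup hf))
  intro d
  induction d with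
  | zero =>
    exact fun C hC => ⟨C, subset_rfl, fun f hf g hg r hr => by simpa using hC f hf g hg r hr⟩
  | succ d ih =>
    intro C hC
    let S := C ∪ C.biUnion fun f => C.biUnion (N f)
    have hS : ∀ f ∈ S, f ∈ C ∨ deg f < d + 1 := fun f hf => by
      rcases Finset.mem_union.1 hf with hf | hf
      · exact .inl hf
      · simp only [Finset.mem_biUnion] at hf
        obtain ⟨p, hp, q, hq, hf⟩ := hf
        exact hC p hp q hq f hf
    obtain ⟨C', hSC', hC'⟩ := ih S fun f hf g hg r hr => by
      have hdeg := hN f g r hr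
      rcases hS f hf, hS g hg with ⟨hf | hf, hg | hg⟩
      · exact .inl (Finset.mem_union_right _ (Finset.mem_biUnion.2
          ⟨f, hf, Finset.mem_biUnion.2 ⟨g, hg, hr⟩⟩))
      all_goals exact .inr (by omega)
    exact ⟨C', Finset.subset_union_left.trans hSC', hC'⟩

section Reduction

variable {A : Type*} [CommRing A]

lemma natDegree_C_leadingCoeff_mul_sub_lt {f g : A[X]} (hg : g.natDegree ≠ 0)
    (hgf : g.natDegree ≤ f.natDegree) :
    (Polynomial.C g.leadingCoeff * f - Polynomial.C f.leadingCoeff *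
      (Polynomial.X ^ (f.natDegree - g.natDegree) * g)).natDegree < f.natDegree := by
  refine Nat.lt_of_le_pred (by omega) (Polynomial.natDegree_le_iff_coeff_eq_zero.2 fun m hm => ?_)
  have hdm : f.natDegree ≤ m := Nat.le_of_pred_lt hm
  rw [Polynomial.coeff_sub, Polynomial.coeff_C_mul, Polynomial.coeff_C_mul,
    Polynomial.coeff_X_pow_mul', if_pos (by omega)]
  rcases hdm.eq_or_lt with rfl | hlt
  · rw [Nat.sub_sub_self hgf, Polynomial.coeff_natDegree, Polynomial.coeff_natDegree, mul_comm,
      sub_self]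
  · rw [Polynomial.coeff_eq_zero_of_natDegree_lt hlt,
      Polynomial.coeff_eq_zero_of_natDegree_lt (p := g) (by omega), mul_zero, mul_zero, sub_zero]

lemma exists_pseudo_remainder (f g : A[X]) : ∃ (r : A[X]) (k : ℕ) (q : A[X]),
    (g.natDegree ≠ 0 → r.natDegree < g.natDegree) ∧
      Polynomial.C (g.leadingCoeff ^ k) * f = q * g + r := by
  by_cases hg : g.natDegree = 0
  · exact ⟨f, 0, 0, fun h => absurd hg h, by simp⟩
  induction hn : f.natDegree using Nat.strong_induction_on generalizing f with
  | _ n ih =>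
    subst hn
    by_cases hlt : f.natDegree < g.natDegree
    · exact ⟨f, 0, 0, fun _ => hlt, by simp⟩
    have hdeg := natDegree_C_leadingCoeff_mul_sub_lt hg (not_lt.1 hlt)
    obtain ⟨r, k, q, hr, hq⟩ := ih _ hdeg _ rfl
    refine ⟨r, k + 1, q + Polynomial.C (g.leadingCoeff ^ k) * (Polynomial.C f.leadingCoeff *
      Polynomial.X ^ (f.natDegree - g.natDegree)), hr, ?_⟩
    rw [pow_succ, Polynomial.C_mul]
    linear_combination hq

/-- Families of polynomials closed under derivatives, removal of the leading term, and
pseudo-remainders: in such a family, the signs of the leading coefficients determine, degree by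
degree, the arrangement of the roots and the signs between them. -/
structure IsReductionClosed (C : Finset A[X]) : Prop where
  derivative_mem : ∀ f ∈ C, f.natDegree ≠ 0 → f.derivative ∈ C
  eraseLead_mem : ∀ f ∈ C, f.natDegree ≠ 0 → f.eraseLead ∈ C
  exists_pseudo_remainder_mem : ∀ f ∈ C, ∀ g ∈ C, g.natDegree ≠ 0 → g.natDegree ≤ f.natDegree →
    ∃ r ∈ C, ∃ (k : ℕ) (q : A[X]), r.natDegree < g.natDegree ∧
      Polynomial.C (g.leadingCoeff ^ k) * f = q * g + r

lemma exists_isReductionClosed (F : Finset A[X]) : ∃ C, F ⊆ C ∧ IsReductionClosed C := by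
  classical
  choose R K Q hR hK using exists_pseudo_remainder (A := A)
  let N (f g : A[X]) : Finset A[X] := {_r ∈ {Polynomial.derivative g, g.eraseLead, R f g} |
    g.natDegree ≠ 0 ∧ g.natDegree ≤ f.natDegree}
  have hN : ∀ f g, ∀ r ∈ N f g, r.natDegree < f.natDegree ∧ r.natDegree < g.natDegree := by
    intro f g r hr
    simp only [N, Finset.mem_filter, Finset.mem_insert, Finset.mem_singleton] at hr
    obtain ⟨hr, hg, hgf⟩ := hr
    suffices r.natDegree < g.natDegree from ⟨this.trans_le hgf, this⟩
    rcases hr with rfl | rfl | rfl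
    · exact Polynomial.natDegree_derivative_lt hg
    · exact g.eraseLead_natDegree_le.trans_lt (by omega)
    · exact hR f g hg
  obtain ⟨C, hFC, hC⟩ := exists_finset_closed N Polynomial.natDegree hN F
  refine ⟨C, hFC, fun f hf hd => hC f hf f hf ?_, fun f hf hd => hC f hf f hf ?_,
    fun f hf g hg hd hle => ⟨R f g, hC f hf g hg ?_, K f g, Q f g, hR f g hd, hK f g⟩⟩
  all_goals simp [N, *]

end Reduction

section Specialization

variable {A L₁ L₂ : Type*} [CommRing A] [Field L₁] [LinearOrder L₁] [IsStrictOrderedRing L₁]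
  [Field L₂] [LinearOrder L₂] [IsStrictOrderedRing L₂] {α : A →+* L₁} {β : A →+* L₂}

lemma map_eraseLead_of_leadingCoeff_eq_zero {B : Type*} [CommRing B] (φ : A →+* B) {f : A[X]}
    (h : φ f.leadingCoeff = 0) : f.eraseLead.map φ = f.map φ := by
  conv_rhs => rw [← f.eraseLead_add_monomial_natDegree_leadingCoeff]
  rw [Polynomial.map_add, Polynomial.map_monomial, h, Polynomial.monomial_zero_right, add_zero]

lemma derivative_map_ne_zero {L : Type*} [Field L] [CharZero L] (φ : A →+* L) {f : A[X]}
    (hd : f.natDegree ≠ 0) (h : φ f.leadingCoeff ≠ 0) : (f.map φ).derivative ≠ 0 := fun h0 =>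
  hd <| by rw [← Polynomial.natDegree_map_of_leadingCoeff_ne_zero φ h,
    Polynomial.derivative_eq_zero.1 h0]

lemma sign_eval_map_eq_of_mul_eq {x : L₁} {y : L₂} {c : A} {f g q r : A[X]}
    (h : Polynomial.C c * f = q * g + r) (hc0 : α c ≠ 0)
    (hc : SignType.sign (α c) = SignType.sign (β c))
    (hx : (g.map α).eval x = 0) (hy : (g.map β).eval y = 0)
    (hr : SignType.sign ((r.map α).eval x) = SignType.sign ((r.map β).eval y)) :
    SignType.sign ((f.map α).eval x) = SignType.sign ((f.map β).eval y) := by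
  have hα := congrArg (fun p => (Polynomial.map α p).eval x) h
  have hβ := congrArg (fun p => (Polynomial.map β p).eval y) h
  simp only [Polynomial.map_mul, Polynomial.map_add, Polynomial.map_C, Polynomial.eval_mul,
    Polynomial.eval_add, Polynomial.eval_C, hx, hy, mul_zero, zero_add] at hα hβ
  rw [← hα, ← hβ, sign_mul, sign_mul, ← hc] at hr
  exact mul_left_cancel₀ (sign_ne_zero.2 hc0) hr

/-- `x` is a root of the image of the nonconstant polynomial `f`, which has the same degree as
`f`. -/
structure IsProperRoot {L : Type*} [Field L] (φ : A →+* L) (f : A[X]) (x : L) : Prop where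
  natDegree_ne_zero : f.natDegree ≠ 0
  map_leadingCoeff_ne_zero : φ f.leadingCoeff ≠ 0
  eval_map_eq_zero : (f.map φ).eval x = 0

variable {C : Finset A[X]} {f : A[X]} {Z : Order.PartialIso L₁ L₂}

-- Dividing `f` by the polynomial vanishing at `p` reduces its sign to that of the remainder.
lemma IsReductionClosed.sign_eval_eq_of_isProperRoot (hC : IsReductionClosed C)
    (hlc : ∀ f ∈ C, SignType.sign (α f.leadingCoeff) = SignType.sign (β f.leadingCoeff))
    (hlow : ∀ g ∈ C, g.natDegree < f.natDegree → SameSigns Z (g.map α) (g.map β)) (hf : f ∈ C)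
    {p : L₁ × L₂} (hp : p ∈ Z.val) {g : A[X]} (hg : g ∈ C) (hgf : g.natDegree ≤ f.natDegree)
    (hgs : SameSigns Z (g.map α) (g.map β)) (hroot : IsProperRoot α g p.1) :
    SignType.sign ((f.map α).eval p.1) = SignType.sign ((f.map β).eval p.2) := by
  obtain ⟨r, hrC, k, q, hr, hq⟩ :=
    hC.exists_pseudo_remainder_mem f hf g hg hroot.natDegree_ne_zero hgf
  have hβ : (g.map β).eval p.2 = 0 := by
    rw [← sign_eq_zero_iff, ← hgs _ _ (sameCell_of_mem hp), hroot.eval_map_eq_zero, sign_zero]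
  refine sign_eval_map_eq_of_mul_eq hq ?_ ?_ hroot.eval_map_eq_zero hβ
    (hlow r hrC (hr.trans_le hgf) _ _ (sameCell_of_mem hp))
  · rw [map_pow]
    exact pow_ne_zero k hroot.map_leadingCoeff_ne_zero
  · simp only [map_pow, sign_pow, hlc g hg]

variable [HasPolynomialIVT L₁] [HasPolynomialIVT L₂]

lemma IsReductionClosed.exists_sameSigns_of_natDegree_lt (hC : IsReductionClosed C)
    (hlc : ∀ f ∈ C, SignType.sign (α f.leadingCoeff) = SignType.sign (β f.leadingCoeff))
    (hlow : ∀ g ∈ C, g.natDegree < f.natDegree → SameSigns Z (g.map α) (g.map β)) (hf : f ∈ C)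
    (hZ : ∀ p ∈ Z.val, SignType.sign ((f.map α).eval p.1) = SignType.sign ((f.map β).eval p.2)) :
    ∃ Z' : Order.PartialIso L₁ L₂, Z.val ⊆ Z'.val ∧ SameSigns Z' (f.map α) (f.map β) ∧
      ∀ p ∈ Z'.val, p ∈ Z.val ∨ IsProperRoot α f p.1 := by
  have hlcf := hlc f hf
  by_cases hd : f.natDegree = 0
  · refine ⟨Z, subset_rfl, fun x y _ => ?_, fun p hp => .inl hp⟩
    rw [Polynomial.leadingCoeff, hd] at hlcf
    rw [Polynomial.eq_C_of_natDegree_eq_zero hd]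
    simpa using hlcf
  by_cases hα : α f.leadingCoeff = 0
  · have hβ : β f.leadingCoeff = 0 := by
      rw [← sign_eq_zero_iff, ← hlcf, hα, sign_zero]
    have herase := hlow _ (hC.eraseLead_mem f hf hd)
      (f.eraseLead_natDegree_le.trans_lt (by omega))
    rw [map_eraseLead_of_leadingCoeff_eq_zero α hα, map_eraseLead_of_leadingCoeff_eq_zero β hβ]
      at herase
    exact ⟨Z, subset_rfl, herase, fun p hp => .inl hp⟩
  · have hβ : β f.leadingCoeff ≠ 0 := by rwa [← sign_ne_zero, ← hlcf, sign_ne_zero]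
    have hder := hlow _ (hC.derivative_mem f hf hd) (Polynomial.natDegree_derivative_lt hd)
    rw [← Polynomial.derivative_map, ← Polynomial.derivative_map] at hder
    obtain ⟨Z', hsub, hsame, hnew⟩ := hder.exists_sameSigns_of_derivative
      (derivative_map_ne_zero α hd hα) (derivative_map_ne_zero β hd hβ) hZ
    exact ⟨Z', hsub, hsame, fun p hp => (hnew p hp).imp_right (⟨hd, hα, ·⟩)⟩

lemma IsReductionClosed.exists_sameSigns (hC : IsReductionClosed C)
    (hlc : ∀ f ∈ C, SignType.sign (α f.leadingCoeff) = SignType.sign (β f.leadingCoeff)) :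
    ∃ Z : Order.PartialIso L₁ L₂, ∀ f ∈ C, SameSigns Z (f.map α) (f.map β) := by
  classical
  suffices key : ∀ s ⊆ C, (∀ g ∈ s, ∀ f ∈ C, f.natDegree < g.natDegree → f ∈ s) →
      ∃ Z : Order.PartialIso L₁ L₂, (∀ f ∈ s, SameSigns Z (f.map α) (f.map β)) ∧
        ∀ p ∈ Z.val, ∃ g ∈ s, IsProperRoot α g p.1 by
    obtain ⟨Z, hZ, -⟩ := key C subset_rfl fun _ _ f hf _ => hf
    exact ⟨Z, hZ⟩
  intro s
  induction s using Finset.induction_on_max_value (fun f : A[X] => f.natDegree) with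
  | empty => exact fun _ _ => ⟨default, by simp, by simp [default]⟩
  | insert f s hfs hmax ih =>
    intro hsub hdown
    have hlow : ∀ g ∈ insert f s, ∀ h ∈ C, h.natDegree < g.natDegree → h ∈ s := by
      intro g hg h hh hlt
      refine Finset.mem_of_mem_insert_of_ne (hdown g hg h hh hlt) ?_
      rintro rfl
      rcases Finset.mem_insert.1 hg with rfl | hg
      exacts [lt_irrefl _ hlt, (hmax g hg).not_gt hlt]
    obtain ⟨Z, hsame, hroot⟩ := ih ((Finset.subset_insert f s).trans hsub) fun g hg =>
      hlow g (Finset.mem_insert_of_mem hg)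
    have hf : f ∈ C := hsub (Finset.mem_insert_self f s)
    have hlow' : ∀ g ∈ C, g.natDegree < f.natDegree → SameSigns Z (g.map α) (g.map β) :=
      fun g hg hlt => hsame g (hlow f (Finset.mem_insert_self f s) g hg hlt)
    obtain ⟨Z', hZ', hsame', hnew⟩ := hC.exists_sameSigns_of_natDegree_lt hlc hlow' hf
      fun p hp => by
        obtain ⟨g, hg, hgp⟩ := hroot p hp
        exact hC.sign_eval_eq_of_isProperRoot hlc hlow' hf hp (hsub (Finset.mem_insert_of_mem hg))
          (hmax g hg) (hsame g hg) hgp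
    refine ⟨Z', Finset.forall_mem_insert _ _ _ |>.2 ⟨hsame', fun g hg => (hsame g hg).mono hZ'⟩,
      fun p hp => ?_⟩
    rcases hnew p hp with hp | hp
    · exact (hroot p hp).imp fun g hg => ⟨Finset.mem_insert_of_mem hg.1, hg.2⟩
    · exact ⟨f, Finset.mem_insert_self f s, hp⟩

end Specialization

section Transfer

universe u v w

theorem exists_finset_forall_exists_sign_eval_eq {A : Type u} [CommRing A] (F : Finset A[X]) :
    ∃ G : Finset A, ∀ {L₁ : Type v} {L₂ : Type w}
      [Field L₁] [LinearOrder L₁] [IsStrictOrderedRing L₁] [HasPolynomialIVT L₁]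
      [Field L₂] [LinearOrder L₂] [IsStrictOrderedRing L₂] [HasPolynomialIVT L₂]
      (α : A →+* L₁) (β : A →+* L₂), (∀ c ∈ G, SignType.sign (α c) = SignType.sign (β c)) →
      ∀ x : L₁, ∃ y : L₂, ∀ f ∈ F,
        SignType.sign ((f.map α).eval x) = SignType.sign ((f.map β).eval y) := by
  classical
  obtain ⟨C, hFC, hC⟩ := exists_isReductionClosed F
  refine ⟨C.image Polynomial.leadingCoeff, fun α β hG x => ?_⟩
  obtain ⟨Z, hZ⟩ := hC.exists_sameSigns (Finset.forall_mem_image.1 hG)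
  obtain ⟨y, hxy⟩ := Z.exists_across x
  exact ⟨y, fun f hf => hZ f (hFC hf) x y hxy⟩

variable {R : Type u} {L : Type v} [Field R] [LinearOrder R] [IsStrictOrderedRing R]
  [HasPolynomialIVT R] [Field L] [LinearOrder L] [IsStrictOrderedRing L] [HasPolynomialIVT L]

theorem exists_sign_eval_eq_sign {n : ℕ} (φ : MvPolynomial (Fin n) R →+* L)
    (F : Finset (MvPolynomial (Fin n) R)) :
    ∃ v : Fin n → R, ∀ f ∈ F, SignType.sign (φ f) = SignType.sign (eval v f) := by
  classical
  induction n with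
  | zero =>
    refine ⟨Fin.elim0, fun f _ => ?_⟩
    obtain ⟨c, rfl⟩ := MvPolynomial.C_surjective (Fin 0) f
    rw [eval_C]
    exact sign_map_of_hasPolynomialIVT (φ.comp C) c
  | succ n ih =>
    obtain ⟨G, hG⟩ := exists_finset_forall_exists_sign_eval_eq (F.image (finSuccEquiv R n))
    let ψ : (MvPolynomial (Fin n) R)[X] →+* L := φ.comp (finSuccEquiv R n).symm.toRingHom
    obtain ⟨v, hv⟩ := ih (ψ.comp Polynomial.C) G
    obtain ⟨y, hy⟩ := hG (ψ.comp Polynomial.C) (eval v) hv (ψ Polynomial.X)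
    refine ⟨Fin.cons y v, fun f hf => ?_⟩
    have hψ : ((finSuccEquiv R n f).map (ψ.comp Polynomial.C)).eval (ψ Polynomial.X) = φ f := by
      rw [Polynomial.eval_map, ← Polynomial.hom_eval₂, Polynomial.eval₂_C_X]
      simp [ψ]
    rw [eval_eq_eval_mv_eval', ← hy _ (Finset.mem_image_of_mem _ hf), hψ]

end Transfer

/-! ### Orderings and ordered fields with the intermediate value property -/

section Preordering

variable {A : Type*} [CommRing A]

/-- The preordering `T + a * T` generated by an element `a` over a preordering `T`. Preorderings
that may contain `-1` are represented by subsemirings containing all sums of squares. -/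
def adjoinElem (T : Subsemiring A) (hT : Subsemiring.sumSq A ≤ T) (a : A) : Subsemiring A where
  carrier := {x | ∃ s ∈ T, ∃ t ∈ T, x = s + a * t}
  mul_mem' := by
    rintro _ _ ⟨s, hs, t, ht, rfl⟩ ⟨s', hs', t', ht', rfl⟩
    have ha : a * a ∈ T := hT (Subsemiring.mem_sumSq.2 (.mul_self a))
    exact ⟨s * s' + a * a * (t * t'), add_mem (mul_mem hs hs') (mul_mem ha (mul_mem ht ht')),
      s * t' + t * s', add_mem (mul_mem hs ht') (mul_mem ht hs'), by ring⟩
  one_mem' := ⟨1, one_mem T, 0, zero_mem T, by ring⟩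
  add_mem' := by
    rintro _ _ ⟨s, hs, t, ht, rfl⟩ ⟨s', hs', t', ht', rfl⟩
    exact ⟨s + s', add_mem hs hs', t + t', add_mem ht ht', by ring⟩
  zero_mem' := ⟨0, zero_mem T, 0, zero_mem T, by ring⟩

lemma le_adjoinElem {T : Subsemiring A} (hT : Subsemiring.sumSq A ≤ T) (a : A) :
    T ≤ adjoinElem T hT a :=
  fun x hx => ⟨x, hx, 0, zero_mem T, by ring⟩

lemma self_mem_adjoinElem {T : Subsemiring A} (hT : Subsemiring.sumSq A ≤ T) (a : A) :
    a ∈ adjoinElem T hT a :=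
  ⟨0, zero_mem T, 1, one_mem T, by ring⟩

lemma exists_isOrdering_ge (T : RingPreordering A) :
    ∃ Q : RingPreordering A, T ≤ Q ∧ Q.IsOrdering := by
  obtain ⟨Q, hTQ, hQ⟩ := zorn_le_nonempty₀ {S : Subsemiring A | T.toSubsemiring ≤ S ∧ -1 ∉ S}
    (fun c hc hchain S hS => ⟨sSup c, ⟨(hc hS).1.trans (le_sSup hS), fun h => by
      obtain ⟨S', hS', h⟩ := (Subsemiring.mem_sSup_of_directedOn ⟨S, hS⟩ hchain.directedOn).1 h
      exact (hc hS').2 h⟩, fun _ => le_sSup⟩) T.toSubsemiring ⟨le_rfl, T.neg_one_notMem⟩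
  have hsq : ∀ a, a * a ∈ Q := fun a => hTQ (T.mul_self_mem a)
  have hsumSq : Subsemiring.sumSq A ≤ Q := by
    rw [← Subsemiring.closure_isSquare, Subsemiring.closure_le]
    rintro _ ⟨a, rfl⟩
    exact hsq a
  have hadjoin : ∀ a ∉ Q, -1 ∈ adjoinElem Q hsumSq a := by
    intro a ha
    by_contra hneg
    have hle := le_adjoinElem hsumSq a
    exact ha (hQ.le_of_ge ⟨hTQ.trans hle, hneg⟩ hle (self_mem_adjoinElem hsumSq a))
  refine ⟨⟨Q, fun ⟨a, ha⟩ => ha ▸ hsq a, hQ.prop.2⟩, hTQ, RingPreordering.isOrdering_iff.2 ?_⟩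
  intro a b hab
  by_contra! h
  obtain ⟨s, hs, t, ht, hst⟩ := hadjoin a h.1
  obtain ⟨s', hs', t', ht', hst'⟩ := hadjoin b h.2
  refine hQ.prop.2 ?_
  have h1 : -1 = s + s' + s * s' + -(a * b) * (t * t') := by
    linear_combination (1 + s') * hst - a * t * hst'
  rw [h1]
  exact add_mem (add_mem (add_mem hs hs') (mul_mem hs hs')) (mul_mem hab (mul_mem ht ht'))

end Preordering

section OrderingCone

variable {A Ω : Type*} [CommRing A] [Field Ω]

/-- `P` is the set of nonnegative elements of a linear ordering of the subring `P - P`. -/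
structure IsOrderingCone (P : Subsemiring Ω) : Prop where
  eq_zero_of_neg_mem : ∀ x ∈ P, -x ∈ P → x = 0
  sub_mem_or_sub_mem : ∀ x ∈ P, ∀ y ∈ P, x - y ∈ P ∨ y - x ∈ P

lemma isOrderingCone_map_of_ker_eq (φ : A →+* Ω) (Q : RingPreordering A) [Q.IsOrdering]
    (hφ : RingHom.ker φ = Q.support) : IsOrderingCone (Q.toSubsemiring.map φ) where
  eq_zero_of_neg_mem := by
    rintro _ ⟨a, ha, rfl⟩ ⟨b, hb, hab⟩
    have hsum : a + b ∈ RingHom.ker φ := by rw [RingHom.mem_ker, map_add, hab, add_neg_cancel]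
    rw [hφ, RingPreordering.mem_support] at hsum
    rw [← RingHom.mem_ker, hφ, RingPreordering.mem_support]
    exact ⟨ha, by simpa using add_mem (show b ∈ Q from hb) hsum.2⟩
  sub_mem_or_sub_mem := by
    rintro _ ⟨a, -, rfl⟩ _ ⟨b, -, rfl⟩
    rcases mem_or_neg_mem Q (a - b) with h | h
    · exact .inl ⟨a - b, h, map_sub φ a b⟩
    · exact .inr ⟨-(a - b), h, by rw [neg_sub, map_sub]⟩

lemma IsOrderingCone.exists_maximal_ge {P : Subsemiring Ω} (hP : IsOrderingCone P) :
    ∃ P', P ≤ P' ∧ Maximal IsOrderingCone P' := by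
  refine zorn_le_nonempty₀ {P : Subsemiring Ω | IsOrderingCone P} (fun c hc hchain S hS =>
    ⟨sSup c, ?_, fun _ => le_sSup⟩) P hP
  have hpair : ∀ x ∈ sSup c, ∀ y ∈ sSup c, ∃ S ∈ c, x ∈ S ∧ y ∈ S := by
    simp only [Subsemiring.mem_sSup_of_directedOn ⟨S, hS⟩ hchain.directedOn]
    rintro x ⟨S, hS, hx⟩ y ⟨T, hT, hy⟩
    rcases hchain.total hS hT with h | h
    exacts [⟨T, hT, h hx, hy⟩, ⟨S, hS, hx, h hy⟩]
  refine ⟨fun x hx hx' => ?_, fun x hx y hy => ?_⟩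
  · obtain ⟨S, hS, hx, hx'⟩ := hpair x hx (-x) hx'
    exact (hc hS).eq_zero_of_neg_mem x hx hx'
  · obtain ⟨S, hS, hx, hy⟩ := hpair x hx y hy
    exact ((hc hS).sub_mem_or_sub_mem x hx y hy).imp (le_sSup hS ·) (le_sSup hS ·)

lemma IsOrderingCone.exists_isOrderingCone_div_mem {P : Subsemiring Ω} (hP : IsOrderingCone P) :
    ∃ P', IsOrderingCone P' ∧ ∀ x y, x ∈ P → y ∈ P → x / y ∈ P' := by
  let P' : Subsemiring Ω :=
    { carrier := {x | ∃ b ∈ P, b ≠ 0 ∧ x * b ∈ P}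
      mul_mem' := by
        rintro x y ⟨b, hb, hb0, hx⟩ ⟨c, hc, hc0, hy⟩
        exact ⟨b * c, mul_mem hb hc, mul_ne_zero hb0 hc0, by
          rw [mul_mul_mul_comm]; exact mul_mem hx hy⟩
      one_mem' := ⟨1, one_mem _, one_ne_zero, by simp⟩
      add_mem' := by
        rintro x y ⟨b, hb, hb0, hx⟩ ⟨c, hc, hc0, hy⟩
        exact ⟨b * c, mul_mem hb hc, mul_ne_zero hb0 hc0, by
          rw [show (x + y) * (b * c) = x * b * c + b * (y * c) by ring]
          exact add_mem (mul_mem hx hc) (mul_mem hb hy)⟩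
      zero_mem' := ⟨1, one_mem _, one_ne_zero, by simp⟩ }
  refine ⟨P', ⟨?_, ?_⟩, fun x y hx hy => ?_⟩
  · rintro x ⟨b, hb, hb0, hx⟩ ⟨c, hc, hc0, hx'⟩
    have h0 : x * b * c = 0 := hP.eq_zero_of_neg_mem _ (mul_mem hx hc) (by
      rw [show -(x * b * c) = -x * c * b by ring]
      exact mul_mem hx' hb)
    simpa [hb0, hc0] using h0
  · rintro x ⟨b, hb, hb0, hx⟩ y ⟨c, hc, hc0, hy⟩
    have hbc := mul_mem hb hc
    have hbc0 := mul_ne_zero hb0 hc0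
    refine (hP.sub_mem_or_sub_mem _ (mul_mem hx hc) _ (mul_mem hb hy)).imp
      (fun h => ⟨b * c, hbc, hbc0, ?_⟩) fun h => ⟨b * c, hbc, hbc0, ?_⟩
    · rwa [show (x - y) * (b * c) = x * b * c - b * (y * c) by ring]
    · rwa [show (y - x) * (b * c) = b * (y * c) - x * b * c by ring]
  · by_cases hy0 : y = 0
    · rw [hy0, div_zero]
      exact zero_mem _
    · exact ⟨y, hy, hy0, by rwa [div_mul_cancel₀ x hy0]⟩

lemma inv_mem_of_maximal_isOrderingCone {P : Subsemiring Ω} (hP : Maximal IsOrderingCone P) {x : Ω}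
    (hx : x ∈ P) : x⁻¹ ∈ P := by
  obtain ⟨P', hP', hdiv⟩ := hP.prop.exists_isOrderingCone_div_mem
  have hPP' : P ≤ P' := fun y hy => by simpa using hdiv y 1 hy (one_mem _)
  simpa using hP.le_of_ge hP' hPP' (hdiv 1 x (one_mem _) hx)

/-- The subfield `P ∪ -P` on which a cone closed under inversion defines an ordering. -/
def IsOrderingCone.subfield {P : Subsemiring Ω} (hP : IsOrderingCone P)
    (hinv : ∀ x ∈ P, x⁻¹ ∈ P) : Subfield Ω where
  carrier := {x | x ∈ P ∨ -x ∈ P}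
  mul_mem' := by
    rintro x y (hx | hx) (hy | hy)
    · exact .inl (mul_mem hx hy)
    · exact .inr (by simpa using mul_mem hx hy)
    · exact .inr (by simpa using mul_mem hx hy)
    · exact .inl (by simpa using mul_mem hx hy)
  one_mem' := .inl (one_mem P)
  add_mem' := by
    rintro x y (hx | hx) (hy | hy)
    · exact .inl (add_mem hx hy)
    · simpa [sub_eq_add_neg, add_comm] using hP.sub_mem_or_sub_mem _ hx _ hy
    · simpa [sub_eq_add_neg, add_comm, or_comm] using hP.sub_mem_or_sub_mem _ hx _ hy
    · exact .inr (by simpa [add_comm] using add_mem hx hy)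
  zero_mem' := .inl (zero_mem P)
  neg_mem' := by
    rintro x (hx | hx)
    · exact .inr (by simpa using hx)
    · exact .inl hx
  inv_mem' := by
    rintro x (hx | hx)
    · exact .inl (hinv x hx)
    · exact .inr (by simpa [inv_neg] using hinv _ hx)

lemma IsOrderingCone.exists_linearOrder_subfield {P : Subsemiring Ω} (hP : IsOrderingCone P)
    (hinv : ∀ x ∈ P, x⁻¹ ∈ P) :
    ∃ (_ : LinearOrder (hP.subfield hinv)) (_ : IsStrictOrderedRing (hP.subfield hinv)),
      ∀ x : hP.subfield hinv, 0 ≤ x ↔ (x : Ω) ∈ P := by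
  classical
  let E := hP.subfield hinv
  let C : RingCone E :=
    { P.comap E.subtype with
      eq_zero_of_mem_of_neg_mem' := fun {x} hx hx' => Subtype.ext (hP.eq_zero_of_neg_mem x hx hx') }
  have : HasMemOrNegMem C := ⟨fun x => x.2⟩
  let _ : LinearOrder E := .mkOfAddGroupCone C
  have : IsOrderedRing E := .mkOfCone C
  refine ⟨inferInstance, IsOrderedRing.toIsStrictOrderedRing E, fun x => ?_⟩
  change x - 0 ∈ C ↔ _
  rw [sub_zero]
  rfl

end OrderingCone

section SignChange

variable {L : Type*} [Field L] [LinearOrder L] [IsStrictOrderedRing L]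

variable (L) in
/-- The semiring of sums of squares of polynomials with nonnegative constant weights. -/
noncomputable def weightedSumSq : Subsemiring L[X] :=
  Submonoid.subsemiringClosure
    { carrier := {p | ∃ c : L, 0 ≤ c ∧ ∃ g : L[X], p = Polynomial.C c * (g * g)}
      mul_mem' := by
        rintro _ _ ⟨c, hc, g, rfl⟩ ⟨d, hd, h, rfl⟩
        exact ⟨c * d, mul_nonneg hc hd, g * h, by rw [Polynomial.C_mul]; ring⟩
      one_mem' := ⟨1, zero_le_one, 1, by simp⟩ }

lemma C_mul_mul_self_mem_weightedSumSq {c : L} (hc : 0 ≤ c) (g : L[X]) :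
    Polynomial.C c * (g * g) ∈ weightedSumSq L :=
  AddSubmonoid.subset_closure ⟨c, hc, g, rfl⟩

lemma eval_nonneg_of_mem_weightedSumSq {s : L[X]} (hs : s ∈ weightedSumSq L) (x : L) :
    0 ≤ s.eval x := by
  induction hs using AddSubmonoid.closure_induction with
  | mem p hp =>
    obtain ⟨c, hc, g, rfl⟩ := hp
    rw [Polynomial.eval_mul, Polynomial.eval_C, Polynomial.eval_mul]
    exact mul_nonneg hc (mul_self_nonneg _)
  | zero => rw [Polynomial.eval_zero]
  | add p q _ _ hp hq =>
    rw [Polynomial.eval_add]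
    exact add_nonneg hp hq

lemma exists_mem_weightedSumSq_dvd_sub_natDegree_le {f : L[X]} (hf : f.natDegree ≠ 0) {s : L[X]}
    (hs : s ∈ weightedSumSq L) :
    ∃ s' ∈ weightedSumSq L, f ∣ s - s' ∧ s'.natDegree ≤ 2 * (f.natDegree - 1) := by
  induction hs using AddSubmonoid.closure_induction with
  | mem p hp =>
    obtain ⟨c, hc, g, rfl⟩ := hp
    refine ⟨_, C_mul_mul_self_mem_weightedSumSq hc (g % f),
      ⟨Polynomial.C c * ((g / f) * (g + g % f)), ?_⟩, ?_⟩
    · linear_combination -Polynomial.C c * (g + g % f) * EuclideanDomain.div_add_mod g f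
    · have hmod := Polynomial.natDegree_mod_lt g hf
      refine (Polynomial.natDegree_C_mul_le _ _).trans (Polynomial.natDegree_mul_le.trans ?_)
      omega
  | zero => exact ⟨0, zero_mem _, by simp, by simp⟩
  | add p q _ _ hp hq =>
    obtain ⟨p', hp', hpdvd, hpdeg⟩ := hp
    obtain ⟨q', hq', hqdvd, hqdeg⟩ := hq
    refine ⟨p' + q', add_mem hp' hq', ?_,
      (Polynomial.natDegree_add_le _ _).trans (max_le hpdeg hqdeg)⟩
    rw [add_sub_add_comm]
    exact dvd_add hpdvd hqdvd

-- The cofactor of `f` in `1 + s'` has smaller degree than `f` and changes sign as well.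
lemma not_dvd_one_add_of_eval_mul_neg {f s : L[X]} {a b : L} (hab : f.eval a * f.eval b < 0)
    (hs : s ∈ weightedSumSq L) : ¬f ∣ 1 + s := by
  induction hn : f.natDegree using Nat.strong_induction_on generalizing f s with
  | _ n ih =>
    subst hn
    intro hdvd
    have hd : f.natDegree ≠ 0 := fun h0 => by
      rw [Polynomial.eq_C_of_natDegree_eq_zero h0, Polynomial.eval_C, Polynomial.eval_C] at hab
      exact hab.not_ge (mul_self_nonneg _)
    obtain ⟨s', hs', hsub, hdeg⟩ := exists_mem_weightedSumSq_dvd_sub_natDegree_le hd hs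
    obtain ⟨h, hh⟩ : f ∣ 1 + s' :=
      (dvd_add_left hsub).1 (by rwa [add_add_sub_cancel])
    have hpos : ∀ x, 0 < f.eval x * h.eval x := fun x => by
      rw [← Polynomial.eval_mul, ← hh, Polynomial.eval_add, Polynomial.eval_one]
      exact add_pos_of_pos_of_nonneg one_pos (eval_nonneg_of_mem_weightedSumSq hs' x)
    have hne : f ≠ 0 := by rintro rfl; simp at hd
    have hhne : h ≠ 0 := by rintro rfl; simpa using hpos 0
    have hlt : h.natDegree < f.natDegree := by
      have hmul : (1 + s').natDegree = f.natDegree + h.natDegree := by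
        rw [hh, Polynomial.natDegree_mul hne hhne]
      have hle : (1 + s').natDegree ≤ 2 * (f.natDegree - 1) :=
        (Polynomial.natDegree_add_le _ _).trans (max_le (by simp) hdeg)
      omega
    refine ih _ hlt ?_ hs' rfl (hh ▸ dvd_mul_left h f)
    refine neg_of_mul_pos_right (a := f.eval a * f.eval b) ?_ hab.le
    rw [mul_mul_mul_comm]
    exact mul_pos (hpos a) (hpos b)

lemma hasPolynomialIVT_of_exists_eval_eq_zero
    (h : ∀ (f : L[X]) (a b : L), f.eval a * f.eval b < 0 → ∃ t, f.eval t = 0) :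
    HasPolynomialIVT L := by
  suffices key : ∀ (f : L[X]) (a b : L), a < b → f.eval a * f.eval b < 0 →
      ∃ c ∈ Set.Ioo a b, f.eval c = 0 from
    ⟨fun f a b hlt ha hb => key f a b hlt (mul_neg_of_neg_of_pos ha hb)⟩
  intro f a b hlt hab
  induction hn : f.natDegree using Nat.strong_induction_on generalizing f with
  | _ n ih =>
    subst hn
    obtain ⟨t, ht⟩ := h f a b hab
    by_cases hmem : t ∈ Set.Ioo a b
    · exact ⟨t, hmem, ht⟩
    obtain ⟨g, rfl⟩ := Polynomial.dvd_iff_isRoot.2 ht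
    have hg0 : g ≠ 0 := by rintro rfl; simp at hab
    have hdeg : g.natDegree < ((Polynomial.X - Polynomial.C t) * g).natDegree := by
      rw [Polynomial.natDegree_mul (Polynomial.X_sub_C_ne_zero t) hg0,
        Polynomial.natDegree_X_sub_C]
      omega
    have hside : 0 ≤ (a - t) * (b - t) := by
      rw [Set.mem_Ioo, not_and_or, not_lt, not_lt] at hmem
      rcases hmem with hta | hbt
      · exact mul_nonneg (by linarith) (by linarith)
      · exact mul_nonneg_of_nonpos_of_nonpos (by linarith) (by linarith)
    have hgab : g.eval a * g.eval b < 0 := by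
      simp only [Polynomial.eval_mul, Polynomial.eval_sub, Polynomial.eval_X, Polynomial.eval_C,
        mul_mul_mul_comm _ (g.eval a)] at hab
      exact neg_of_mul_neg_right hab hside
    obtain ⟨c, hc, hc0⟩ := ih _ hdeg g hgab rfl
    exact ⟨c, hc, by rw [Polynomial.eval_mul, hc0, mul_zero]⟩

/-- The preordering of polynomials that are congruent to a weighted sum of squares modulo a
polynomial `f` that changes sign. -/
noncomputable def weightedSumSqMod {f : L[X]} {a b : L} (hab : f.eval a * f.eval b < 0) :
    RingPreordering L[X] :=
  RingPreordering.mk' {p | ∃ s ∈ weightedSumSq L, f ∣ p - s}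
    (by
      rintro p q ⟨s, hs, hp⟩ ⟨t, ht, hq⟩
      exact ⟨s + t, add_mem hs ht, by rw [add_sub_add_comm]; exact dvd_add hp hq⟩)
    (by
      rintro p q ⟨s, hs, hp⟩ ⟨t, ht, hq⟩
      exact ⟨s * t, mul_mem hs ht, dvd_mul_sub_mul hp hq⟩)
    (fun p => ⟨p * p, by simpa using C_mul_mul_self_mem_weightedSumSq zero_le_one p, by simp⟩)
    (by
      rintro ⟨s, hs, h⟩
      rw [← neg_add', dvd_neg] at h
      exact not_dvd_one_add_of_eval_mul_neg hab hs h)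

lemma exists_ker_aeval_eq {F : Type*} (Ω : Type*) [Field F] [Field Ω] [IsAlgClosed Ω] [Algebra F Ω]
    (I : Ideal F[X]) [hI : I.IsPrime] (hI0 : I ≠ ⊥) :
    ∃ θ : Ω, RingHom.ker (Polynomial.aeval θ : F[X] →ₐ[F] Ω) = I := by
  have hmax : I.IsMaximal := IsPrime.to_maximal_ideal hI0
  obtain ⟨p, rfl⟩ := (IsPrincipalIdealRing.principal I).principal
  have hp : p.degree ≠ 0 := fun h => hI.ne_top <| Ideal.eq_top_of_isUnit_mem _
    (Submodule.mem_span_singleton_self p) (Polynomial.isUnit_iff_degree_eq_zero.2 h)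
  obtain ⟨θ, hθ⟩ := IsAlgClosed.exists_aeval_eq_zero Ω p hp
  refine ⟨θ, (hmax.eq_of_le (RingHom.ker_ne_top _) ?_).symm⟩
  rw [Ideal.submodule_span_eq, Ideal.span_singleton_le_iff_mem]
  exact hθ

-- Otherwise the ordering of `L` extends to the field obtained by adjoining a root of a polynomial
-- that changes sign, contradicting maximality.
lemma hasPolynomialIVT_of_forall_isOrderingCone {Ω : Type*} [Field Ω] [IsAlgClosed Ω] [Algebra L Ω]
    (hmax : ∀ P : Subsemiring Ω, IsOrderingCone P → (∀ a : L, 0 ≤ a → algebraMap L Ω a ∈ P) →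
      ∀ x ∈ P, x ∈ (algebraMap L Ω).range) : HasPolynomialIVT L := by
  refine hasPolynomialIVT_of_exists_eval_eq_zero fun f a b hab => ?_
  obtain ⟨Q, hTQ, _⟩ := exists_isOrdering_ge (weightedSumSqMod hab)
  have hfQ : f ∈ Q.support := ⟨hTQ ⟨0, zero_mem _, by simp⟩, hTQ ⟨0, zero_mem _, by simp⟩⟩
  have hf0 : f ≠ 0 := by rintro rfl; simp at hab
  obtain ⟨θ, hθ⟩ := exists_ker_aeval_eq Ω Q.support fun h => hf0 (by rwa [h] at hfQ)
  have hrange := hmax _ (isOrderingCone_map_of_ker_eq (Polynomial.aeval θ).toRingHom Q hθ)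
    fun c hc => ⟨Polynomial.C c, hTQ ⟨Polynomial.C c,
      by simpa using C_mul_mul_self_mem_weightedSumSq hc 1, by simp⟩, Polynomial.aeval_C θ c⟩
  obtain ⟨t, rfl⟩ : θ ∈ (algebraMap L Ω).range := by
    rcases mem_or_neg_mem Q (Polynomial.X : L[X]) with hX | hX
    · exact hrange θ ⟨_, hX, Polynomial.aeval_X θ⟩
    · rw [← neg_mem_iff]
      exact hrange (-θ) ⟨_, hX, by simp⟩
  refine ⟨t, ?_⟩
  rw [← hθ, RingHom.mem_ker, Polynomial.aeval_algebraMap_apply, map_eq_zero] at hfQ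
  simpa using hfQ

end SignChange

theorem exists_hasPolynomialIVT_ringHom_nonneg.{u} {A : Type u} [CommRing A]
    (T : RingPreordering A) :
    ∃ (L : Type u) (_ : Field L) (_ : LinearOrder L) (_ : IsStrictOrderedRing L)
      (_ : HasPolynomialIVT L) (φ : A →+* L), ∀ t ∈ T, 0 ≤ φ t := by
  obtain ⟨Q, hTQ, _⟩ := exists_isOrdering_ge T
  let k := FractionRing (A ⧸ Q.support)
  let Ω := AlgebraicClosure k
  let φ : A →+* Ω := (algebraMap k Ω).comp
    ((algebraMap (A ⧸ Q.support) k).comp (Ideal.Quotient.mk Q.support))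
  have hφ : RingHom.ker φ = Q.support := by
    ext a
    simp [φ, k, Ideal.Quotient.eq_zero_iff_mem]
  obtain ⟨P, hQP, hP⟩ := (isOrderingCone_map_of_ker_eq φ Q hφ).exists_maximal_ge
  have hinv : ∀ x ∈ P, x⁻¹ ∈ P := fun x hx => inv_mem_of_maximal_isOrderingCone hP hx
  obtain ⟨_, _, hnonneg⟩ := hP.prop.exists_linearOrder_subfield hinv
  let E := hP.prop.subfield hinv
  have hφE : ∀ a, φ a ∈ E := fun a => (mem_or_neg_mem Q a).imp (fun h => hQP ⟨a, h, rfl⟩)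
    fun h => hQP ⟨-a, h, map_neg φ a⟩
  have hIVT : HasPolynomialIVT E :=
    hasPolynomialIVT_of_forall_isOrderingCone (Ω := Ω) fun P' hP' hE x hx =>
      ⟨⟨x, .inl (hP.le_of_ge hP' (fun y hy => hE ⟨y, .inl hy⟩ ((hnonneg _).2 hy)) hx)⟩, rfl⟩
  exact ⟨E, inferInstance, inferInstance, inferInstance, hIVT, φ.codRestrict E hφE,
    fun t ht => (hnonneg _).2 (hQP ⟨t, hTQ ht, rfl⟩)⟩

theorem exists_eval_nonneg_of_mem_preordering {n : ℕ} {R : Type*} [Field R] [LinearOrder R]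
    [IsStrictOrderedRing R] [HasPolynomialIVT R] (T : RingPreordering (MvPolynomial (Fin n) R))
    (F : Finset (MvPolynomial (Fin n) R)) (hF : ∀ f ∈ F, f ∈ T) :
    ∃ v : Fin n → R, ∀ f ∈ F, 0 ≤ eval v f := by
  obtain ⟨L, _, _, _, _, φ, hφ⟩ := exists_hasPolynomialIVT_ringHom_nonneg T
  obtain ⟨v, hv⟩ := exists_sign_eval_eq_sign φ F
  refine ⟨v, fun f hf => ?_⟩
  rw [← sign_nonneg_iff, ← hv f hf, sign_nonneg_iff]
  exact hφ f (hF f hf)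

/-- The Krivine–Stengle Positivstellensatz for a single constraint `0 ≤ h`. -/
theorem exists_one_add_eq_mul_of_pos {n : ℕ} {R : Type*} [Field R] [LinearOrder R]
    [IsStrictOrderedRing R] [HasPolynomialIVT R] {h p : MvPolynomial (Fin n) R}
    (hp : ∀ x, 0 ≤ eval x h → 0 < eval x p) :
    ∃ s ∈ adjoinElem _ le_rfl h, ∃ t ∈ adjoinElem _ le_rfl h, 1 + s = p * t := by
  classical
  let T := adjoinElem _ le_rfl h
  have hT : Subsemiring.sumSq _ ≤ T := le_adjoinElem le_rfl h
  obtain ⟨s, hs, t, ht, hst⟩ : -1 ∈ adjoinElem T hT (-p) := by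
    by_contra hneg
    obtain ⟨v, hv⟩ := exists_eval_nonneg_of_mem_preordering
      ⟨adjoinElem T hT (-p), fun ⟨a, ha⟩ =>
        ha ▸ le_adjoinElem hT _ (hT (Subsemiring.mem_sumSq.2 (.mul_self a))), hneg⟩
      {h, -p} (by
        simp only [Finset.forall_mem_insert, Finset.mem_singleton, forall_eq]
        exact ⟨le_adjoinElem hT _ (self_mem_adjoinElem le_rfl h), self_mem_adjoinElem hT (-p)⟩)
    simp only [Finset.forall_mem_insert, Finset.mem_singleton, forall_eq, map_neg] at hv
    linarith [hp v hv.1]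
  exact ⟨s, hs, t, ht, by linear_combination -hst⟩

/-! ### Archimedean quadratic modules -/

section Maximal

variable {A : Type*} [CommRing A]

/-- Subsets of `A` closed under addition and under multiplication by sums of squares. The quadratic
modules of `A` are those containing `1`. -/
abbrev SumSqModule (A : Type*) [CommRing A] := Submodule (Subsemiring.sumSq A) A

namespace SumSqModule

lemma mul_mem_of_isSumSq {M : SumSqModule A} {s m : A} (hs : IsSumSq s) (hm : m ∈ M) : s * m ∈ M :=
  M.smul_mem ⟨s, Subsemiring.mem_sumSq.2 hs⟩ hm

lemma mem_of_isSumSq {M : SumSqModule A} (hM : 1 ∈ M) {s : A} (hs : IsSumSq s) : s ∈ M := by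
  simpa using mul_mem_of_isSumSq hs hM

/-- A preordering, viewed as a quadratic module. -/
def ofSubsemiring (T : Subsemiring A) (hT : Subsemiring.sumSq A ≤ T) : SumSqModule A :=
  { T.toAddSubmonoid with smul_mem' := fun s _ hx => mul_mem (hT s.2) hx }

lemma exists_maximal_ge {M : SumSqModule A} (hM : -1 ∉ M) :
    ∃ Q : SumSqModule A, M ≤ Q ∧ Maximal (-1 ∉ ·) Q :=
  zorn_le_nonempty₀ {Q : SumSqModule A | -1 ∉ Q} (fun c hc hchain Q hQ =>
    ⟨sSup c, fun h => by
      obtain ⟨Q', hQ', h⟩ := (Submodule.mem_sSup_of_directed ⟨Q, hQ⟩ hchain.directedOn).1 h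
      exact hc hQ' h, fun _ => le_sSup⟩) M hM

lemma exists_neg_one_eq_add_mul_of_maximal {Q : SumSqModule A} (hQ : Maximal (-1 ∉ ·) Q) {a : A}
    (ha : a ∉ Q) : ∃ q ∈ Q, ∃ s, IsSumSq s ∧ -1 = q + s * a := by
  have hmem : -1 ∈ Q ⊔ Submodule.span _ {a} := by
    by_contra hneg
    exact ha (hQ.le_of_ge hneg le_sup_left
      (Submodule.mem_sup_right (Submodule.mem_span_singleton_self a)))
  obtain ⟨q, hq, _, hy, h⟩ := Submodule.mem_sup.1 hmem
  obtain ⟨s, rfl⟩ := Submodule.mem_span_singleton.1 hy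
  exact ⟨q, hq, s, Subsemiring.mem_sumSq.1 s.2, h.symm⟩

/-- The ideal `M ∩ -M` of a quadratic module `M`. It is an ideal because every element of `A` is a
difference of two squares when `2` is invertible. -/
def support (M : SumSqModule A) (h2 : IsUnit (2 : A)) : Ideal A where
  carrier := {a | a ∈ M ∧ -a ∈ M}
  zero_mem' := by simp
  add_mem' := fun ha hb => ⟨add_mem ha.1 hb.1, by rw [neg_add]; exact add_mem ha.2 hb.2⟩
  smul_mem' := by
    rintro b a ⟨ha, hna⟩
    obtain ⟨c, hc⟩ := h2.exists_left_inv
    have hba : b * a = c * (b + 1) * (c * (b + 1)) * a + c * (b - 1) * (c * (b - 1)) * -a := by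
      linear_combination (-(b * a)) * (c * 2 + 1) * hc
    have hnba : -(b * a) = c * (b + 1) * (c * (b + 1)) * -a + c * (b - 1) * (c * (b - 1)) * a := by
      linear_combination -hba
    have hsq : ∀ {u m : A}, m ∈ M → u * u * m ∈ M := fun hm => mul_mem_of_isSumSq (.mul_self _) hm
    exact ⟨(congrArg (· ∈ M) hba).mpr (add_mem (hsq ha) (hsq hna)),
      (congrArg (· ∈ M) hnba).mpr (add_mem (hsq hna) (hsq ha))⟩

lemma mem_or_neg_mem_of_maximal (h2 : IsUnit (2 : A)) {Q : SumSqModule A} (h1 : 1 ∈ Q)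
    (hQ : Maximal (-1 ∉ ·) Q) (a : A) : a ∈ Q ∨ -a ∈ Q := by
  by_contra! h
  obtain ⟨q, hq, s, hs, hqs⟩ := exists_neg_one_eq_add_mul_of_maximal hQ h.1
  obtain ⟨q', hq', s', hs', hqs'⟩ := exists_neg_one_eq_add_mul_of_maximal hQ h.2
  have hneg_s : -s ∈ Q := by
    have : -s = s' + s' * q + s * q' := by linear_combination s * hqs' + s' * hqs
    rw [this]
    exact add_mem (add_mem (mem_of_isSumSq h1 hs') (mul_mem_of_isSumSq hs' hq))
      (mul_mem_of_isSumSq hs hq')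
  have hs_support : s ∈ Q.support h2 := ⟨mem_of_isSumSq h1 hs, hneg_s⟩
  exact hQ.prop (hqs ▸ add_mem hq (Ideal.mul_mem_right a _ hs_support).1)

end SumSqModule

end Maximal

namespace SumSqModule

variable {A : Type*} [CommRing A] [Algebra ℝ A] {M : SumSqModule A}

/-- Every element of `A` is bounded above by a real number in the preorder with positive
cone `M`. -/
def IsArchimedean (M : SumSqModule A) : Prop :=
  ∀ a, ∃ r : ℝ, algebraMap ℝ A r - a ∈ M

lemma isSumSq_algebraMap {r : ℝ} (hr : 0 ≤ r) : IsSumSq (algebraMap ℝ A r) := by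
  rw [← Real.mul_self_sqrt hr, map_mul]
  exact .mul_self _

lemma algebraMap_mem (hM : 1 ∈ M) {r : ℝ} (hr : 0 ≤ r) : algebraMap ℝ A r ∈ M :=
  mem_of_isSumSq hM (isSumSq_algebraMap hr)

lemma algebraMap_mul_mem {r : ℝ} (hr : 0 ≤ r) {a : A} (ha : a ∈ M) : algebraMap ℝ A r * a ∈ M :=
  mul_mem_of_isSumSq (isSumSq_algebraMap hr) ha

lemma algebraMap_mul_mem_iff {r : ℝ} (hr : 0 < r) {a : A} : algebraMap ℝ A r * a ∈ M ↔ a ∈ M := by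
  refine ⟨fun h => ?_, algebraMap_mul_mem hr.le⟩
  have := algebraMap_mul_mem (inv_nonneg.2 hr.le) h
  rwa [← mul_assoc, ← map_mul, inv_mul_cancel₀ hr.ne', map_one, one_mul] at this

lemma algebraMap_add_mem_of_le (hM : 1 ∈ M) {r r' : ℝ} (hr : r ≤ r') {a : A}
    (ha : algebraMap ℝ A r + a ∈ M) : algebraMap ℝ A r' + a ∈ M := by
  convert add_mem ha (algebraMap_mem hM (sub_nonneg.2 hr)) using 1
  rw [map_sub]
  ring

lemma algebraMap_sub_mem_of_le (hM : 1 ∈ M) {r r' : ℝ} (hr : r ≤ r') {a : A}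
    (ha : algebraMap ℝ A r - a ∈ M) : algebraMap ℝ A r' - a ∈ M := by
  rw [sub_eq_add_neg] at ha ⊢
  exact algebraMap_add_mem_of_le hM hr ha

lemma nonneg_of_algebraMap_mem (hM : -1 ∉ M) {r : ℝ} (hr : algebraMap ℝ A r ∈ M) : 0 ≤ r := by
  by_contra! hlt
  refine hM ((algebraMap_mul_mem_iff (neg_pos.2 hlt)).1 ?_)
  rwa [map_neg, neg_mul_neg, mul_one]

lemma exists_algebraMap_sub_sq_mem_of_mem_adjoin (hM : 1 ∈ M) {S : Set A}
    (hS : ∀ a ∈ S, ∃ r : ℝ, algebraMap ℝ A r - a * a ∈ M) {a : A} (ha : a ∈ Algebra.adjoin ℝ S) :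
    ∃ r : ℝ, 0 ≤ r ∧ algebraMap ℝ A r - a * a ∈ M := by
  induction ha using Algebra.adjoin_induction with
  | mem a ha =>
    obtain ⟨r, hr⟩ := hS a ha
    exact ⟨max r 0, le_max_right r 0, algebraMap_sub_mem_of_le hM (le_max_left r 0) hr⟩
  | algebraMap r =>
    exact ⟨r * r, mul_self_nonneg r, by rw [map_mul, sub_self]; exact zero_mem M⟩
  | add a b _ _ ha hb =>
    obtain ⟨r, hr0, hr⟩ := ha
    obtain ⟨s, hs0, hs⟩ := hb
    refine ⟨2 * (r + s), by positivity, ?_⟩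
    convert add_mem (algebraMap_mul_mem zero_le_two (add_mem hr hs))
      (mem_of_isSumSq hM (.mul_self (a - b))) using 1
    simp only [map_mul, map_add, map_ofNat]
    ring
  | mul a b _ _ ha hb =>
    obtain ⟨r, hr0, hr⟩ := ha
    obtain ⟨s, hs0, hs⟩ := hb
    refine ⟨r * s, mul_nonneg hr0 hs0, ?_⟩
    convert add_mem (algebraMap_mul_mem hr0 hs) (mul_mem_of_isSumSq (.mul_self b) hr) using 1
    rw [map_mul]
    ring

theorem isArchimedean_of_adjoin_eq_top (hM : 1 ∈ M) {S : Set A} (hS : Algebra.adjoin ℝ S = ⊤)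
    (hb : ∀ a ∈ S, ∃ r : ℝ, algebraMap ℝ A r - a * a ∈ M) : M.IsArchimedean := by
  intro a
  obtain ⟨r, -, hr⟩ := exists_algebraMap_sub_sq_mem_of_mem_adjoin hM hb (a := a) (hS ▸ trivial)
  refine ⟨(r + 1) / 2, (algebraMap_mul_mem_iff zero_lt_two).1 ?_⟩
  convert add_mem hr (mem_of_isSumSq hM (.mul_self (a - 1))) using 1
  rw [mul_sub, ← map_mul, mul_div_cancel₀ _ two_ne_zero, map_add, map_one, map_ofNat]
  ring

theorem isArchimedean_of_algebraMap_sub_sum_sq_mem {ι : Type*} [Fintype ι]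
    {M : SumSqModule (MvPolynomial ι ℝ)} (hM : 1 ∈ M) {N : ℝ}
    (hN : algebraMap ℝ _ N - ∑ i, X i * X i ∈ M) : M.IsArchimedean := by
  classical
  refine isArchimedean_of_adjoin_eq_top hM MvPolynomial.adjoin_range_X ?_
  rintro _ ⟨i, rfl⟩
  refine ⟨N, ?_⟩
  have hrest : ∑ j ∈ Finset.univ.erase i, (X j * X j : MvPolynomial ι ℝ) ∈ M :=
    mem_of_isSumSq hM (.sum fun j _ => .mul_self (X j))
  rw [← Finset.add_sum_erase _ _ (Finset.mem_univ i), ← sub_sub] at hN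
  simpa only [sub_add_cancel] using add_mem hN hrest

lemma mem_of_forall_algebraMap_sub_add_mem (hM : 1 ∈ M) (harch : M.IsArchimedean) {f : A} {δ : ℝ}
    (hδ : 0 < δ) (hstep : ∀ r : ℝ, 0 ≤ r → algebraMap ℝ A r + f ∈ M →
      algebraMap ℝ A (r - δ) + f ∈ M) : f ∈ M := by
  obtain ⟨r, hr⟩ := harch (-f)
  rw [sub_neg_eq_add] at hr
  have hdescend : ∀ j : ℕ, algebraMap ℝ A (max (r - j * δ) 0) + f ∈ M := by
    intro j
    induction j with
    | zero => exact algebraMap_add_mem_of_le hM (by simp) hr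
    | succ j ih =>
      rcases le_total (r - j * δ) 0 with hj | hj
      · rw [max_eq_right hj] at ih
        exact algebraMap_add_mem_of_le hM (le_max_right _ _) ih
      · rw [max_eq_left hj] at ih
        refine algebraMap_add_mem_of_le hM ((le_of_eq ?_).trans (le_max_left _ _)) (hstep _ hj ih)
        push_cast
        ring
  obtain ⟨j, hj⟩ := exists_nat_ge (r / δ)
  have hfinal := hdescend j
  rwa [max_eq_right (sub_nonpos.2 ((div_le_iff₀ hδ).1 hj)), map_zero, zero_add] at hfinal

theorem mem_of_mul_eq_one_add (hM : 1 ∈ M) (harch : M.IsArchimedean) {f s m : A} (hs : IsSumSq s)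
    (hm : m ∈ M) (hfs : f * s = 1 + m) : f ∈ M := by
  obtain ⟨N₁, hN₁⟩ := harch s
  obtain ⟨N₂, hN₂⟩ := harch (s * s * f)
  obtain ⟨k, hk, hk₁, hk₂⟩ : ∃ k : ℝ, 0 < k ∧ N₁ ≤ 2 * k ∧ N₂ ≤ 2 * k - 1 :=
    ⟨max 1 (max N₁ (N₂ + 1)), by positivity, by grind, by grind⟩
  have hs_le := algebraMap_sub_mem_of_le hM hk₁ hN₁
  have hssf_le := algebraMap_sub_mem_of_le hM hk₂ hN₂
  refine mem_of_forall_algebraMap_sub_add_mem hM harch (δ := (k * k)⁻¹) (by positivity)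
    fun r hr hf => ?_
  refine (algebraMap_mul_mem_iff (mul_pos hk hk)).1 ?_
  have hcancel : algebraMap ℝ A (k * k) * algebraMap ℝ A (k * k)⁻¹ = 1 := by
    rw [← map_mul, mul_inv_cancel₀ (mul_pos hk hk).ne', map_one]
  set κ := algebraMap ℝ A k with hκ
  set ρ := algebraMap ℝ A r with hρ
  have hdecomp : algebraMap ℝ A (k * k) * (algebraMap ℝ A (r - (k * k)⁻¹) + f) =
      (κ - s) * (κ - s) * (ρ + f) + algebraMap ℝ A (2 * k) * m +
        ρ * (s * (algebraMap ℝ A (2 * k) - s)) + (algebraMap ℝ A (2 * k - 1) - s * s * f) := by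
    rw [map_sub, mul_add, mul_sub, hcancel]
    simp only [map_mul, map_sub, map_one, map_ofNat, ← hκ, ← hρ]
    linear_combination 2 * κ * hfs
  rw [hdecomp]
  exact add_mem (add_mem (add_mem (mul_mem_of_isSumSq (.mul_self _) hf)
    (algebraMap_mul_mem (by positivity) hm))
    (algebraMap_mul_mem hr (mul_mem_of_isSumSq hs hs_le))) hssf_le

/-- The closure of an archimedean quadratic module: the elements `a` with `-ε ≤ a` for all real
`ε > 0`, in the preorder with positive cone `M`. -/
def closure (M : SumSqModule A) (hM : 1 ∈ M) (harch : M.IsArchimedean) : SumSqModule A where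
  carrier := {a | ∀ ε : ℝ, 0 < ε → algebraMap ℝ A ε + a ∈ M}
  zero_mem' ε hε := by simpa using algebraMap_mem hM hε.le
  add_mem' := by
    intro a b ha hb ε hε
    convert add_mem (ha (ε / 2) (half_pos hε)) (hb (ε / 2) (half_pos hε)) using 1
    rw [add_add_add_comm, ← map_add, add_halves]
  smul_mem' := by
    rintro ⟨s, hs⟩ a ha ε hε
    obtain ⟨N, hN⟩ := harch s
    have hN' := algebraMap_sub_mem_of_le hM (le_max_left N 1) hN
    have hpos : 0 < max N 1 := lt_max_of_lt_right one_pos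
    set δ := ε / max N 1 with hδ_def
    have hδ : 0 < δ := div_pos hε hpos
    convert add_mem (algebraMap_mul_mem hδ.le hN')
      (mul_mem_of_isSumSq (Subsemiring.mem_sumSq.1 hs) (ha δ hδ)) using 1
    rw [mul_sub, ← map_mul, hδ_def, div_mul_cancel₀ _ hpos.ne', Subsemiring.smul_def, smul_eq_mul]
    ring

lemma mem_of_maximal_of_forall_algebraMap_add_mem {Q : SumSqModule A} (h1 : 1 ∈ Q)
    (harch : Q.IsArchimedean) (hQ : Maximal (-1 ∉ ·) Q) {a : A}
    (ha : ∀ ε : ℝ, 0 < ε → algebraMap ℝ A ε + a ∈ Q) : a ∈ Q := by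
  refine hQ.le_of_ge (y := Q.closure h1 harch) (fun hneg => ?_)
    (fun b hb ε hε => add_mem (algebraMap_mem h1 hε.le) hb) ha
  have hhalf : algebraMap ℝ A (1 / 2 + -1) ∈ Q := by
    simpa only [map_add, map_neg, map_one] using hneg (1 / 2) one_half_pos
  linarith [nonneg_of_algebraMap_mem hQ.prop hhalf]

variable (A) in
lemma isUnit_two_of_real_algebra : IsUnit (2 : A) := by
  rw [← map_ofNat (algebraMap ℝ A) 2]
  exact (IsUnit.mk0 _ two_ne_zero).map _

lemma exists_sub_algebraMap_mem_support {Q : SumSqModule A} (h1 : 1 ∈ Q)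
    (harch : Q.IsArchimedean) (hQ : Maximal (-1 ∉ ·) Q) (a : A) :
    ∃ r : ℝ, a - algebraMap ℝ A r ∈ Q.support (isUnit_two_of_real_algebra A) := by
  let S : Set ℝ := {r | a - algebraMap ℝ A r ∈ Q}
  obtain ⟨u, hu⟩ := harch a
  obtain ⟨v, hv⟩ := harch (-a)
  have hne : S.Nonempty := ⟨-v, by simpa [S, add_comm] using hv⟩
  have hbdd : BddAbove S := ⟨u, fun r hr => sub_nonneg.1 <| nonneg_of_algebraMap_mem hQ.prop <| by
    simpa using add_mem hu hr⟩
  refine ⟨sSup S, ?_, ?_⟩ <;>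
    refine mem_of_maximal_of_forall_algebraMap_add_mem h1 harch hQ fun ε hε => ?_
  · obtain ⟨r, hr, hlt⟩ := exists_lt_of_lt_csSup hne (sub_lt_self (sSup S) hε)
    convert add_mem hr (algebraMap_mem h1 (sub_nonneg.2 hlt.le)) using 1
    simp only [map_sub]
    ring
  · have hnotMem : sSup S + ε ∉ S := fun h => by linarith [le_csSup hbdd h]
    convert (mem_or_neg_mem_of_maximal (isUnit_two_of_real_algebra A) h1 hQ _).resolve_left
      hnotMem using 1
    rw [map_add]
    ring

lemma exists_algHom_nonneg_of_maximal {Q : SumSqModule A} (h1 : 1 ∈ Q)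
    (harch : Q.IsArchimedean) (hQ : Maximal (-1 ∉ ·) Q) :
    ∃ φ : A →ₐ[ℝ] ℝ, ∀ a ∈ Q, 0 ≤ φ a := by
  let I := Q.support (isUnit_two_of_real_algebra A)
  have hI : I ≠ ⊤ := fun h => hQ.prop ((Ideal.eq_top_iff_one I).1 h).2
  have : Nontrivial (A ⧸ I) := Ideal.Quotient.nontrivial_iff.2 hI
  have hbij : Function.Bijective (Algebra.ofId ℝ (A ⧸ I)) := by
    refine ⟨(algebraMap ℝ (A ⧸ I)).injective, fun x => ?_⟩
    obtain ⟨a, rfl⟩ := Ideal.Quotient.mk_surjective x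
    obtain ⟨r, hr⟩ := exists_sub_algebraMap_mem_support h1 harch hQ a
    exact ⟨r, (Ideal.Quotient.eq.2 hr).symm⟩
  let φ : A →ₐ[ℝ] ℝ :=
    ((AlgEquiv.ofBijective _ hbij).symm : A ⧸ I →ₐ[ℝ] ℝ).comp (Ideal.Quotient.mkₐ ℝ I)
  refine ⟨φ, fun a ha => nonneg_of_algebraMap_mem hQ.prop ?_⟩
  have hsub : algebraMap ℝ A (φ a) - a ∈ I :=
    Ideal.Quotient.eq.1 ((AlgEquiv.ofBijective _ hbij).apply_symm_apply _)
  simpa using add_mem hsub.1 ha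

lemma IsArchimedean.mono {N : SumSqModule A} (harch : M.IsArchimedean) (h : M ≤ N) :
    N.IsArchimedean :=
  fun a => (harch a).imp fun _ hr => h hr

/-- The representation theorem for archimedean quadratic modules. -/
theorem mem_of_forall_algHom_pos (hM : 1 ∈ M) (harch : M.IsArchimedean) {f : A}
    (hf : ∀ φ : A →ₐ[ℝ] ℝ, (∀ m ∈ M, 0 ≤ φ m) → 0 < φ f) : f ∈ M := by
  by_contra hfM
  have hneg : -1 ∉ M ⊔ Submodule.span _ {-f} := fun h => by
    obtain ⟨m, hm, _, hy, hsum⟩ := Submodule.mem_sup.1 h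
    obtain ⟨s, rfl⟩ := Submodule.mem_span_singleton.1 hy
    rw [Subsemiring.smul_def, smul_eq_mul] at hsum
    exact hfM (mem_of_mul_eq_one_add hM harch (Subsemiring.mem_sumSq.1 s.2) hm
      (by linear_combination -hsum))
  obtain ⟨Q, hle, hQ⟩ := exists_maximal_ge hneg
  have hMQ : M ≤ Q := le_sup_left.trans hle
  have hfQ : -f ∈ Q := hle (Submodule.mem_sup_right (Submodule.mem_span_singleton_self _))
  obtain ⟨φ, hφ⟩ := exists_algHom_nonneg_of_maximal (hMQ hM) (harch.mono hMQ) hQ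
  have hpos := hf φ fun m hm => hφ m (hMQ hm)
  have hnonpos := hφ _ hfQ
  rw [map_neg] at hnonpos
  linarith

/-! ### Wörmann's theorem -/

lemma one_add_mul_mem_of_mem_adjoinElem {A : Type*} [CommRing A] {T : Subsemiring A}
    (hT : Subsemiring.sumSq A ≤ T) {p t₁ t₂ : A} (ht₁ : t₁ ∈ T) (ht₂ : t₂ ∈ T)
    (h : 1 + t₁ = p * t₂) {x : A} (hx : x ∈ adjoinElem T hT p) : (1 + t₁) * x ∈ T := by
  obtain ⟨u, hu, v, hv, rfl⟩ := hx
  have hexpand : (1 + t₁) * (u + p * v) = (1 + t₁) * u + p * p * (t₂ * v) := by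
    linear_combination p * v * h
  rw [hexpand]
  exact add_mem (mul_mem (add_mem (one_mem T) ht₁) hu)
    (mul_mem (hT (Subsemiring.mem_sumSq.2 (.mul_self p))) (mul_mem ht₂ hv))

theorem exists_algebraMap_sub_mem_of_one_add_eq_mul {T : Subsemiring A}
    (hT : Subsemiring.sumSq A ≤ T) {q t₁ t₂ : A} {N : ℝ} (hN : 0 ≤ N) (hq : q ∈ T)
    (ht₁ : t₁ ∈ T) (ht₂ : t₂ ∈ T) (h : 1 + t₁ = (algebraMap ℝ A N - q) * t₂)
    (harch : (ofSubsemiring (adjoinElem T hT (algebraMap ℝ A N - q))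
      (hT.trans (le_adjoinElem hT _))).IsArchimedean) :
    ∃ r : ℝ, algebraMap ℝ A r - q ∈ T := by
  have hmul : ∀ {x}, x ∈ adjoinElem T hT (algebraMap ℝ A N - q) → (1 + t₁) * x ∈ T :=
    one_add_mul_mem_of_mem_adjoinElem hT ht₁ ht₂ h
  have hsq : ∀ a, a * a ∈ T := fun a => hT (Subsemiring.mem_sumSq.2 (.mul_self a))
  obtain ⟨B, hB⟩ := harch t₁
  have ht₁_le : algebraMap ℝ A (B + B / 2 * (B / 2)) - t₁ ∈ T := by
    have hB2 : algebraMap ℝ A B = 2 * algebraMap ℝ A (B / 2) := by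
      rw [← map_ofNat (algebraMap ℝ A) 2, ← map_mul, mul_div_cancel₀ B two_ne_zero]
    convert add_mem (hmul hB) (hsq (t₁ - algebraMap ℝ A (B / 2))) using 1
    rw [map_add, map_mul, hB2]
    ring
  have hNq := hmul (self_mem_adjoinElem hT _)
  refine ⟨N * (1 + (B + B / 2 * (B / 2))), ?_⟩
  convert add_mem (add_mem hNq (mul_mem ht₁ hq))
    (mul_mem (hT (Subsemiring.mem_sumSq.2 (isSumSq_algebraMap hN))) ht₁_le) using 1
  rw [map_mul, map_add, map_one]
  ring

/-- Wörmann's theorem, for a single constraint `0 ≤ h`. -/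
theorem exists_algebraMap_sub_sum_sq_mem_of_isCompact {n : ℕ} {h : MvPolynomial (Fin n) ℝ}
    (hcompact : IsCompact {x | 0 ≤ eval x h}) :
    ∃ r : ℝ, algebraMap ℝ _ r - ∑ i, X i * X i ∈ adjoinElem _ le_rfl h := by
  have hT := le_adjoinElem le_rfl h
  have hq : IsSumSq (∑ i, X i * X i : MvPolynomial (Fin n) ℝ) := .sum fun i _ => .mul_self (X i)
  have hcont : Continuous fun x : Fin n → ℝ => ∑ i, x i * x i := by fun_prop
  obtain ⟨B, hB⟩ := (hcompact.image hcont).bddAbove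
  obtain ⟨N, hN0, hN⟩ : ∃ N : ℝ, 0 ≤ N ∧ B < N :=
    ⟨max B 0 + 1, by positivity, by grind⟩
  have hpos : ∀ x, 0 ≤ eval x h → 0 < eval x (algebraMap ℝ _ N - ∑ i, X i * X i) := by
    intro x hx
    simpa [algebraMap_eq] using (hB ⟨x, hx, rfl⟩).trans_lt hN
  obtain ⟨t₁, ht₁, t₂, ht₂, h12⟩ := exists_one_add_eq_mul_of_pos hpos
  exact exists_algebraMap_sub_mem_of_one_add_eq_mul hT hN0 (hT (Subsemiring.mem_sumSq.2 hq)) ht₁ ht₂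
    h12 (isArchimedean_of_algebraMap_sub_sum_sq_mem (one_mem (adjoinElem _ hT _))
      (self_mem_adjoinElem hT _))

end SumSqModule

/-- The quadratic module generated by a family `g`. -/
def quadraticModule {A ι : Type*} [CommRing A] (g : ι → A) : SumSqModule A :=
  Submodule.span _ (insert 1 (Set.range g))

section Generated

variable {A ι : Type*} [CommRing A] (g : ι → A)

lemma one_mem_quadraticModule : 1 ∈ quadraticModule g :=
  Submodule.subset_span (Set.mem_insert 1 _)

lemma mem_quadraticModule_self (j : ι) : g j ∈ quadraticModule g :=
  Submodule.subset_span (Set.mem_insert_of_mem 1 ⟨j, rfl⟩)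

lemma mem_quadraticModule_iff [Fintype ι] {f : A} :
    f ∈ quadraticModule g ↔ ∃ τ₀ : A, ∃ τ : ι → A,
      IsSumSq τ₀ ∧ (∀ j, IsSumSq (τ j)) ∧ f = τ₀ + ∑ j, τ j * g j := by
  simp only [quadraticModule, Submodule.mem_span_insert, Submodule.mem_span_range_iff_exists_fun]
  constructor
  · rintro ⟨τ₀, _, ⟨τ, rfl⟩, rfl⟩
    exact ⟨τ₀, fun j => τ j, Subsemiring.mem_sumSq.1 τ₀.2, fun j => Subsemiring.mem_sumSq.1 (τ j).2,
      by simp [Subsemiring.smul_def]⟩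
  · rintro ⟨τ₀, τ, hτ₀, hτ, rfl⟩
    exact ⟨⟨τ₀, Subsemiring.mem_sumSq.2 hτ₀⟩, _,
      ⟨fun j => ⟨τ j, Subsemiring.mem_sumSq.2 (hτ j)⟩, rfl⟩, by simp [Subsemiring.smul_def]⟩

end Generated

lemma isArchimedean_quadraticModule_of_putinarProperty {n l : ℕ}
    {g : Fin l → MvPolynomial (Fin n) ℝ} (hg : PutinarProperty g) :
    (quadraticModule g).IsArchimedean := by
  obtain ⟨σ₀, σ, hσ₀, hσ, hcompact⟩ := hg
  have hmem := (mem_quadraticModule_iff g).2 ⟨σ₀, σ, hσ₀, hσ, rfl⟩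
  have h1 := one_mem_quadraticModule g
  obtain ⟨N, s, hs, t, ht, hN⟩ :=
    SumSqModule.exists_algebraMap_sub_sum_sq_mem_of_isCompact hcompact
  refine SumSqModule.isArchimedean_of_algebraMap_sub_sum_sq_mem h1 (N := N) ?_
  rw [hN, mul_comm]
  exact add_mem (SumSqModule.mem_of_isSumSq h1 (Subsemiring.mem_sumSq.1 hs))
    (SumSqModule.mul_mem_of_isSumSq (Subsemiring.mem_sumSq.1 ht) hmem)

end Putinar

theorem stmt_6 {n l : ℕ} (g : Fin l → MvPolynomial (Fin n) ℝ)
    (K : Set (Fin n → ℝ)) (hKdef : K = {x : Fin n → ℝ | ∀ j, 0 ≤ eval x (g j)})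
    (hPut : PutinarProperty g)
    (f : MvPolynomial (Fin n) ℝ) (hf : ∀ x ∈ K, 0 < eval x f) :
    ∃ τ₀ : MvPolynomial (Fin n) ℝ, ∃ τ : Fin l → MvPolynomial (Fin n) ℝ,
      IsSumSq τ₀ ∧ (∀ j, IsSumSq (τ j)) ∧ f = τ₀ + ∑ j, τ j * g j := by
  refine (Putinar.mem_quadraticModule_iff g).1 ?_
  refine Putinar.SumSqModule.mem_of_forall_algHom_pos (Putinar.one_mem_quadraticModule g)
    (Putinar.isArchimedean_quadraticModule_of_putinarProperty hPut) fun φ hφ => ?_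
  have hφ_eval : ∀ p, φ p = eval (fun i => φ (X i)) p := fun p => by
    conv_lhs => rw [aeval_unique φ]
    rfl
  rw [hφ_eval]
  refine hf _ (hKdef ▸ fun j => ?_)
  rw [← hφ_eval]
  exact hφ _ (Putinar.mem_quadraticModule_self g j)
end

section
/- If every g_j has total degree at most 1 (i.e., all defining polynomials are affine) and K is compact, then K with defining polynomials g₁,…,g_l satisfies Putinar's property. -/
open MvPolynomial

/-!
By the affine form of Farkas' lemma, an affine polynomial that is nonnegative on a nonempty
polyhedron `K = {g ≥ 0}` is a nonnegative combination of `1` and the `gⱼ`. If `K` is bounded by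
`N`, this puts `N + xᵢ` and `N - xᵢ` into the quadratic module generated by the `gⱼ`, hence also
`N² - xᵢ² = ((N + xᵢ)² (N - xᵢ) + (N - xᵢ)² (N + xᵢ)) / 2N`. The sum of these over `i` is
nonnegative exactly on a ball. If `K` is empty, Farkas' lemma represents `-1` instead, which is
nonnegative nowhere.
-/

open Module (Dual)
open PointedCone (hull)

section Farkas

variable {k V ι : Type*} [Field k] [AddCommGroup V] [Module k V]

theorem apply_inv_smul_one (φ : Dual k (V × k)) (x : V) {t : k} (ht : t ≠ 0) :
    φ (t⁻¹ • x, 1) = t⁻¹ * φ (x, t) := by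
  rw [← smul_eq_mul, ← map_smul, Prod.smul_mk, smul_eq_mul, inv_mul_cancel₀ ht]

variable [LinearOrder k] [IsStrictOrderedRing k]

theorem mem_hull_insert_of_add_smul_mem {S : Set (Dual k V)} {b m : Dual k V} {y : V}
    (hS : ∀ a ∈ S, 0 ≤ a y) (hb : b y ≤ 0)
    (hproj : b + b y • m ∈ hull k ((fun a => a + a y • m) '' S)) : b ∈ hull k (insert m S) := by
  have hm : m ∈ hull k (insert m S) := PointedCone.subset_hull (Set.mem_insert m S)
  have hle : hull k ((fun a => a + a y • m) '' S) ≤ hull k (insert m S) := by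
    refine Submodule.span_le.2 (Set.image_subset_iff.2 fun a ha => ?_)
    exact add_mem (PointedCone.subset_hull (Set.mem_insert_of_mem m ha))
      (PointedCone.smul_mem _ (hS a ha) hm)
  have hb_eq : b = (b + b y • m) + (-b y) • m := by module
  rw [hb_eq]
  exact add_mem (hle hproj) (PointedCone.smul_mem _ (neg_nonneg.2 hb) hm)

theorem mem_hull_image_of_forall_nonneg (s : Finset ι) (a : ι → Dual k V) (b : Dual k V)
    (h : ∀ x, (∀ j ∈ s, 0 ≤ a j x) → 0 ≤ b x) : b ∈ hull k (a '' s) := by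
  classical
  induction s using Finset.induction_on generalizing a b with
  | empty =>
    have hb : b = 0 := LinearMap.ext fun x =>
      le_antisymm (by simpa using h (-x)) (h x (by simp))
    simp [hb]
  | insert m s _ ih =>
    by_cases hb : ∀ x, (∀ j ∈ s, 0 ≤ a j x) → 0 ≤ b x
    · exact Submodule.span_mono (Set.image_mono (by simp)) (ih a b hb)
    push Not at hb
    obtain ⟨z, hz, hbz⟩ := hb
    have hmz : a m z < 0 := by
      by_contra! hmz
      exact (h z (by simpa [hmz] using hz)).not_gt hbz
    -- As `a m y = -1`, every `f + f y • a m` vanishes at `y`: the constraint `a m` is eliminated.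
    let y := (-a m z)⁻¹ • z
    have hmy : a m y = -1 := by simp [y, hmz.ne]
    have hay : ∀ j ∈ s, 0 ≤ a j y := fun j hj => by
      simpa [y] using mul_nonpos_of_nonpos_of_nonneg (inv_nonpos.2 hmz.le) (hz j hj)
    have hby : b y ≤ 0 := by
      simpa [y] using mul_nonneg_of_nonpos_of_nonpos (inv_nonpos.2 hmz.le) hbz.le
    rw [Finset.coe_insert, Set.image_insert_eq]
    refine mem_hull_insert_of_add_smul_mem (Set.forall_mem_image.2 hay) hby ?_
    rw [Set.image_image]
    refine ih _ _ fun x hx => ?_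
    have := h (x + a m x • y) (by simpa [hmy, mul_comm (a m x)] using hx)
    simpa [mul_comm (a m x)] using this

theorem mem_hull_of_forall_nonneg {S : Set (Dual k V)} (hS : S.Finite) (b : Dual k V)
    (h : ∀ x, (∀ a ∈ S, 0 ≤ a x) → 0 ≤ b x) : b ∈ hull k S := by
  simpa using mem_hull_image_of_forall_nonneg hS.toFinset id b (by simpa using h)

variable [Finite ι] {φ : ι → Dual k (V × k)}

theorem mem_hull_insert_snd_of_nonneg {f : Dual k (V × k)} {x₀ : V} (hx₀ : ∀ j, 0 ≤ φ j (x₀, 1))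
    (hf : ∀ x, (∀ j, 0 ≤ φ j (x, 1)) → 0 ≤ f (x, 1)) :
    f ∈ hull k (insert (LinearMap.snd k V k) (Set.range φ)) := by
  refine mem_hull_of_forall_nonneg ((Set.finite_range φ).insert _) f ?_
  rintro ⟨x, t⟩ hxt
  obtain ⟨ht, hφ⟩ : 0 ≤ t ∧ ∀ j, 0 ≤ φ j (x, t) := by simpa using hxt
  -- Moving `(x, t)` towards `(x₀, 1)` makes the last coordinate positive, so that one can rescale.
  have hperturbed : ∀ s > 0, 0 ≤ f (x, t) + s * f (x₀, 1) := fun s hs => by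
    have hts : 0 < t + s := by positivity
    have map_perturbed (ψ : Dual k (V × k)) :
        ψ (x + s • x₀, t + s) = ψ (x, t) + s * ψ (x₀, 1) := by
      rw [← smul_eq_mul, ← map_smul, ← map_add]; simp
    have := hf ((t + s)⁻¹ • (x + s • x₀)) fun j => by
      rw [apply_inv_smul_one _ _ hts.ne', map_perturbed]
      have := hφ j
      have := hx₀ j
      positivity
    rw [apply_inv_smul_one _ _ hts.ne', map_perturbed] at this
    exact nonneg_of_mul_nonneg_right this (inv_pos.2 hts)
  have hfx₀ : 0 ≤ f (x₀, 1) := hf x₀ hx₀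
  refine le_of_forall_pos_le_add fun ε hε =>
    (hperturbed (ε / (f (x₀, 1) + 1)) (by positivity)).trans ?_
  gcongr
  rw [div_mul_eq_mul_div, div_le_iff₀ (by positivity)]
  linarith

theorem neg_snd_mem_hull_insert_snd (h : ∀ x, ∃ j, φ j (x, 1) < 0) :
    -LinearMap.snd k V k ∈ hull k (insert (LinearMap.snd k V k) (Set.range φ)) := by
  refine mem_hull_of_forall_nonneg ((Set.finite_range φ).insert _) _ ?_
  rintro ⟨x, t⟩ hxt
  obtain ⟨ht, hφ⟩ : 0 ≤ t ∧ ∀ j, 0 ≤ φ j (x, t) := by simpa using hxt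
  suffices t ≤ 0 by simpa
  by_contra! htpos
  obtain ⟨j, hj⟩ := h (t⁻¹ • x)
  rw [apply_inv_smul_one _ _ htpos.ne'] at hj
  exact hj.not_ge (mul_nonneg (inv_nonneg.2 ht) (hφ j))

end Farkas

section AffinePolynomials

variable {k σ ι : Type*}

section Dehomogenize

variable [CommRing k] [Fintype σ] [DecidableEq σ]

/-- The affine polynomial `x ↦ φ (x, 1)` attached to a linear form `φ` in the variables `x` and
one homogenizing variable, which is the second component of the product. It carries Farkas' lemma
from linear forms over to affine polynomials. -/
noncomputable def dehomogenize : Dual k ((σ → k) × k) →ₗ[k] MvPolynomial σ k where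
  toFun φ := C (φ (0, 1)) + ∑ i, C (φ (Pi.single i 1, 0)) * X i
  map_add' φ ψ := by
    simp only [LinearMap.add_apply, C_add, add_mul, Finset.sum_add_distrib]
    ring
  map_smul' r φ := by simp [smul_eq_C_mul, Finset.mul_sum, mul_assoc]

theorem dehomogenize_apply (φ : Dual k ((σ → k) × k)) :
    dehomogenize φ = C (φ (0, 1)) + ∑ i, C (φ (Pi.single i 1, 0)) * X i :=
  rfl

theorem dehomogenize_snd : dehomogenize (LinearMap.snd k (σ → k) k) = 1 := by
  simp [dehomogenize_apply]

theorem eval_dehomogenize (φ : Dual k ((σ → k) × k)) (x : σ → k) :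
    eval x (dehomogenize φ) = φ (x, 1) := by
  have hx : (x, (1 : k)) = (0, 1) + ∑ i, x i • (Pi.single i 1, 0) := by
    ext i <;> simp [Prod.fst_sum, Prod.snd_sum, Pi.single_apply]
  rw [hx]
  simp only [dehomogenize_apply, map_add, map_sum, map_mul, eval_C, eval_X, map_smul, smul_eq_mul,
    mul_comm]

theorem exists_dehomogenize_eq {p : MvPolynomial σ k} (hp : p.totalDegree ≤ 1) :
    ∃ φ, dehomogenize φ = p := by
  suffices p ∈ LinearMap.range (dehomogenize (k := k) (σ := σ)) from this
  rw [← support_sum_monomial_coeff p]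
  refine sum_mem fun d hd => ?_
  have hdeg : d.degree ≤ 1 := (le_totalDegree hd).trans hp
  rcases Nat.le_one_iff_eq_zero_or_eq_one.1 hdeg with hd0 | hd1
  · obtain rfl := (Finsupp.degree_eq_zero_iff d).1 hd0
    refine ⟨coeff 0 p • LinearMap.snd k _ _, ?_⟩
    rw [map_smul, dehomogenize_snd, smul_eq_C_mul, mul_one, C_apply]
  · obtain ⟨i, rfl⟩ := (Finsupp.sum_eq_one_iff d).1 hd1
    refine ⟨coeff (.single i 1) p • LinearMap.proj i ∘ₗ LinearMap.fst k _ _, ?_⟩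
    rw [map_smul]
    simp [dehomogenize_apply, Pi.single_apply, smul_eq_C_mul, C_mul_X_eq_monomial]

theorem dehomogenize_mem_hull [PartialOrder k] [IsOrderedRing k]
    {φ : ι → Dual k ((σ → k) × k)} {f : Dual k ((σ → k) × k)}
    (hf : f ∈ hull k (insert (LinearMap.snd k (σ → k) k) (Set.range φ))) :
    dehomogenize f ∈ hull k (insert 1 (Set.range fun j => dehomogenize (φ j))) := by
  have := Submodule.mem_map_of_mem (f := dehomogenize.restrictScalars _) hf
  rw [PointedCone.hull, Submodule.map_span] at this
  simpa [Set.image_insert_eq, dehomogenize_snd, ← Set.range_comp, Function.comp_def] using this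

end Dehomogenize

variable [Field k] [LinearOrder k] [IsStrictOrderedRing k] [Finite σ] [Finite ι]
  {g : ι → MvPolynomial σ k}

theorem mem_hull_insert_one_of_nonneg (hg : ∀ j, (g j).totalDegree ≤ 1) {f : MvPolynomial σ k}
    (hf : f.totalDegree ≤ 1) (hne : {x | ∀ j, 0 ≤ eval x (g j)}.Nonempty)
    (hpos : ∀ x, (∀ j, 0 ≤ eval x (g j)) → 0 ≤ eval x f) :
    f ∈ hull k (insert 1 (Set.range g)) := by
  classical
  cases nonempty_fintype σ
  choose φ hφ using fun j => exists_dehomogenize_eq (hg j)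
  obtain rfl : (fun j => dehomogenize (φ j)) = g := funext hφ
  obtain ⟨ψ, rfl⟩ := exists_dehomogenize_eq hf
  obtain ⟨x₀, hx₀⟩ := hne
  simp only [eval_dehomogenize, Set.mem_ofPred_eq] at hx₀ hpos
  exact dehomogenize_mem_hull (mem_hull_insert_snd_of_nonneg hx₀ hpos)

theorem neg_one_mem_hull_insert_one (hg : ∀ j, (g j).totalDegree ≤ 1)
    (hempty : {x | ∀ j, 0 ≤ eval x (g j)} = ∅) :
    -1 ∈ hull k (insert 1 (Set.range g)) := by
  classical
  cases nonempty_fintype σ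
  choose φ hφ using fun j => exists_dehomogenize_eq (hg j)
  obtain rfl : (fun j => dehomogenize (φ j)) = g := funext hφ
  simp only [eval_dehomogenize, Set.eq_empty_iff_forall_notMem, Set.mem_ofPred_eq, not_forall,
    not_le] at hempty
  have hneg : dehomogenize (-LinearMap.snd k (σ → k) k) = -1 := by
    rw [map_neg, dehomogenize_snd]
  rw [← hneg]
  exact dehomogenize_mem_hull (neg_snd_mem_hull_insert_snd hempty)

end AffinePolynomials

section QuadraticModule

/-- The quadratic module generated by a family `g`: all `σ₀ + ∑ j, σ j * g j` with `σ₀` and `σ j`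
sums of squares, encoded as a submodule over the semiring of sums of squares. Putinar's property
asks for an element of it whose nonnegativity set is compact. -/
def quadraticModule {A ι : Type*} [CommRing A] (g : ι → A) : Submodule (Subsemiring.sumSq A) A :=
  Submodule.span _ (insert 1 (Set.range g))

theorem mem_quadraticModule_iff {A ι : Type*} [CommRing A] [Fintype ι] {g : ι → A} {q : A} :
    q ∈ quadraticModule g ↔
      ∃ σ₀ : A, ∃ σ : ι → A, IsSumSq σ₀ ∧ (∀ j, IsSumSq (σ j)) ∧ q = σ₀ + ∑ j, σ j * g j := by
  simp only [quadraticModule, Submodule.mem_span_insert,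
    Submodule.mem_span_range_iff_exists_fun]
  constructor
  · rintro ⟨σ₀, _, ⟨σ, rfl⟩, rfl⟩
    exact ⟨σ₀, fun j => σ j, Subsemiring.mem_sumSq.1 σ₀.2, fun j => Subsemiring.mem_sumSq.1 (σ j).2,
      by simp [Subsemiring.smul_def]⟩
  · rintro ⟨σ₀, σ, hσ₀, hσ, rfl⟩
    exact ⟨⟨σ₀, by simpa⟩, _, ⟨fun j => ⟨σ j, by simpa using hσ j⟩, rfl⟩,
      by simp [Subsemiring.smul_def]⟩

variable {A : Type*} [CommRing A] {Q : Submodule (Subsemiring.sumSq A) A}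

theorem sq_mul_mem (a : A) {q : A} (hq : q ∈ Q) : a ^ 2 * q ∈ Q :=
  Q.smul_mem ⟨a ^ 2, by simpa using (IsSquare.sq a).isSumSq⟩ hq

variable [Algebra ℝ A]

theorem smul_mem_of_nonneg {r : ℝ} (hr : 0 ≤ r) {q : A} (hq : q ∈ Q) : r • q ∈ Q := by
  have := sq_mul_mem (algebraMap ℝ A √r) hq
  rwa [← map_pow, Real.sq_sqrt hr, ← Algebra.smul_def] at this

theorem hull_subset_quadraticModule {ι : Type*} (g : ι → A) :
    (hull ℝ (insert 1 (Set.range g)) : Set A) ⊆ quadraticModule g := fun q hq => by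
  induction hq using Submodule.span_induction with
  | mem q hq => exact Submodule.subset_span hq
  | zero => exact zero_mem _
  | add p q _ _ hp hq => exact add_mem hp hq
  | smul r q _ hq => exact smul_mem_of_nonneg r.2 hq

theorem sq_sub_sq_mem {N : ℝ} (hN : 0 < N) {a : A} (hadd : algebraMap ℝ A N + a ∈ Q)
    (hsub : algebraMap ℝ A N - a ∈ Q) : algebraMap ℝ A N ^ 2 - a ^ 2 ∈ Q := by
  set c := algebraMap ℝ A N
  have hc : algebraMap ℝ A (2 * N)⁻¹ * (2 * c) = 1 := by
    rw [← map_ofNat (algebraMap ℝ A) 2, ← map_mul, ← map_mul, inv_mul_cancel₀ (by positivity),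
      map_one]
  have key : c ^ 2 - a ^ 2 = (2 * N)⁻¹ • ((c + a) ^ 2 * (c - a) + (c - a) ^ 2 * (c + a)) := by
    rw [Algebra.smul_def]
    linear_combination -(c ^ 2 - a ^ 2) * hc
  rw [key]
  exact smul_mem_of_nonneg (by positivity)
    (add_mem (sq_mul_mem _ hsub) (sq_mul_mem _ hadd))

end QuadraticModule

theorem isCompact_setOf_nonneg_sum_sq_sub_sq {ι : Type*} [Fintype ι] (N : ℝ) :
    IsCompact {x : ι → ℝ | 0 ≤ ∑ i, (N ^ 2 - x i ^ 2)} := by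
  set c : ℝ := ∑ _i : ι, N ^ 2
  refine (isCompact_univ_pi fun _ : ι => isCompact_Icc (a := -√c) (b := √c)).of_isClosed_subset
    (isClosed_le continuous_const (by fun_prop)) fun x hx i _ => ?_
  have hsum : ∑ i, x i ^ 2 ≤ c := by simpa [c] using hx
  have hi : x i ^ 2 ≤ c :=
    (Finset.single_le_sum (fun j _ => sq_nonneg (x j)) (Finset.mem_univ i)).trans hsum
  exact abs_le.1 (Real.abs_le_sqrt hi)

theorem putinarProperty_iff_exists_mem_quadraticModule {n l : ℕ}
    {g : Fin l → MvPolynomial (Fin n) ℝ} :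
    PutinarProperty g ↔ ∃ q ∈ quadraticModule g, IsCompact {x | 0 ≤ eval x q} := by
  simp only [PutinarProperty, mem_quadraticModule_iff]
  constructor
  · rintro ⟨σ₀, σ, hσ₀, hσ, hc⟩
    exact ⟨_, ⟨σ₀, σ, hσ₀, hσ, rfl⟩, hc⟩
  · rintro ⟨_, ⟨σ₀, σ, hσ₀, hσ, rfl⟩, hc⟩
    exact ⟨σ₀, σ, hσ₀, hσ, hc⟩

theorem sq_sub_X_sq_mem_quadraticModule {σ ι : Type*} [Finite σ] [Finite ι]
    {g : ι → MvPolynomial σ ℝ} (hg : ∀ j, (g j).totalDegree ≤ 1)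
    (hne : {x | ∀ j, 0 ≤ eval x (g j)}.Nonempty) {N : ℝ} (hN : 0 < N) {i : σ}
    (hbound : ∀ x, (∀ j, 0 ≤ eval x (g j)) → |x i| ≤ N) :
    C N ^ 2 - X i ^ 2 ∈ quadraticModule g := by
  refine sq_sub_sq_mem hN ?_ ?_
  · refine hull_subset_quadraticModule g (mem_hull_insert_one_of_nonneg hg
      ((totalDegree_add _ _).trans (by simp)) hne fun x hx => ?_)
    simpa [neg_le_iff_add_nonneg'] using neg_le_of_abs_le (hbound x hx)
  · refine hull_subset_quadraticModule g (mem_hull_insert_one_of_nonneg hg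
      ((totalDegree_sub _ _).trans (by simp)) hne fun x hx => ?_)
    simpa using le_of_abs_le (hbound x hx)

theorem stmt_8 {n l : ℕ} (g : Fin l → MvPolynomial (Fin n) ℝ)
    (haff : ∀ j, (g j).totalDegree ≤ 1)
    (hcomp : IsCompact {x : Fin n → ℝ | ∀ j, 0 ≤ eval x (g j)}) :
    PutinarProperty g := by
  rw [putinarProperty_iff_exists_mem_quadraticModule]
  rcases Set.eq_empty_or_nonempty {x : Fin n → ℝ | ∀ j, 0 ≤ eval x (g j)} with hempty | hne
  · refine ⟨-1, hull_subset_quadraticModule g (neg_one_mem_hull_insert_one haff hempty), ?_⟩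
    simp [not_le.2 (zero_lt_one' ℝ)]
  · obtain ⟨N, hN, hbound⟩ := hcomp.isBounded.exists_pos_norm_le
    refine ⟨∑ i, (C N ^ 2 - X i ^ 2), sum_mem fun i _ =>
      sq_sub_X_sq_mem_quadraticModule haff hne hN fun x hx =>
        (norm_le_pi_norm x i).trans (hbound x hx), ?_⟩
    simpa using isCompact_setOf_nonneg_sum_sq_sub_sq (ι := Fin n) N
end
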